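/- arXiv:2007.10664 — 11 statements merged into one kernel-verified Lean document; each statement's English description precedes it below -/
import Mathlib

section
/- The following two suprema coincide: sSup { ∑ᵢ ω i ⟪xᵢ, y⟫ : x : ι → H with xᵢ ∈ Mᵢ for all i, ∑ᵢ ω i ‖xᵢ‖² ≤ 1, the (absolutely convergent) series ∑ᵢ ω i • xᵢ lies in M^⊥, and y ∈ M^⊥ with ‖y‖ ≤ 1 } = sSup { ∑ᵢ ω i ⟪xᵢ, y⟫ : x : ι → H with xᵢ ∈ Mᵢ ∩ M^⊥ for all i and ∑ᵢ ω i ‖xᵢ‖² ≤ 1, and y ∈ M^⊥ with ‖y‖ ≤ 1 }. (The left-hand supremum is the cosine of the Friedrichs angle between the product subspace C_ω = ∏ᵢ Mᵢ and the diagonal D_ω in the ω-weighted ℓ² product space over H.) -/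
open RealInnerProductSpace

/-- The supremum defining the cosine of the Friedrichs angle between
the product space `∏ᵢ Mᵢ` and the diagonal (left-hand side) equals the supremum
taken over families with components in `Mᵢ ∩ M^⊥` (right-hand side). -/
theorem stmt_4 {H : Type*} [NormedAddCommGroup H] [InnerProductSpace ℝ H] [CompleteSpace H]
    {ι : Type*} [Countable ι] [Nonempty ι]
    (ω : ι → ℝ) (hω : ∀ i, 0 < ω i) (hωsum : HasSum ω 1)
    (M : ι → Submodule ℝ H) [∀ i, CompleteSpace (M i)]
    (hMnt : ∀ i, M i ≠ ⊥) :
    sSup { r : ℝ | ∃ (x : ι → H) (y : H),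
      (∀ i, x i ∈ M i) ∧
      (Summable fun i => ω i * ‖x i‖ ^ 2) ∧ (∑' i, ω i * ‖x i‖ ^ 2) ≤ 1 ∧
      (Summable fun i => ω i • x i) ∧ (∑' i, ω i • x i) ∈ (⨅ j, M j : Submodule ℝ H)ᗮ ∧
      y ∈ (⨅ j, M j : Submodule ℝ H)ᗮ ∧ ‖y‖ ≤ 1 ∧
      r = ∑' i, ω i * ⟪x i, y⟫ } =
    sSup { r : ℝ | ∃ (x : ι → H) (y : H),
      (∀ i, x i ∈ M i ⊓ (⨅ j, M j : Submodule ℝ H)ᗮ) ∧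
      (Summable fun i => ω i * ‖x i‖ ^ 2) ∧ (∑' i, ω i * ‖x i‖ ^ 2) ≤ 1 ∧
      y ∈ (⨅ j, M j : Submodule ℝ H)ᗮ ∧ ‖y‖ ≤ 1 ∧
      r = ∑' i, ω i * ⟪x i, y⟫ } := by
  have hclosed : IsClosed ((⨅ j, M j : Submodule ℝ H) : Set H) := by
    rw [Submodule.coe_iInf]
    exact isClosed_iInter fun j =>
      (completeSpace_coe_iff_isComplete.mp (inferInstance : CompleteSpace (M j))).isClosed
  generalize hK : (⨅ j, M j : Submodule ℝ H) = K at hclosed ⊢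
  have hKM : ∀ i, K ≤ M i := fun i => hK ▸ iInf_le M i
  haveI : CompleteSpace K := hclosed.completeSpace_coe
  congr 1
  ext r
  constructor
  · rintro ⟨x, y, hx, hs, hle, -, -, hy, hy1, rfl⟩
    have hn : ∀ i, ω i * ‖Kᗮ.starProjection (x i)‖ ^ 2 ≤ ω i * ‖x i‖ ^ 2 := fun i => by
      have h1 : ‖Kᗮ.starProjection (x i)‖ ≤ ‖x i‖ := Kᗮ.norm_starProjection_apply_le (x i)
      have := (hω i).le
      gcongr
    have hs' : Summable fun i => ω i * ‖Kᗮ.starProjection (x i)‖ ^ 2 :=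
      Summable.of_nonneg_of_le (fun i => mul_nonneg (hω i).le (sq_nonneg _)) hn hs
    refine ⟨fun i => Kᗮ.starProjection (x i), y, fun i => ⟨?_, ?_⟩, hs',
      (hs'.tsum_le_tsum hn hs).trans hle, hy, hy1, ?_⟩
    · have h : Kᗮ.starProjection (x i) = x i - K.starProjection (x i) := by
        rw [Submodule.starProjection_orthogonal_val]
      show Kᗮ.starProjection (x i) ∈ M i
      rw [h]
      exact (M i).sub_mem (hx i) (hKM i (K.starProjection_apply_mem _))
    · exact Kᗮ.starProjection_apply_mem _
    · refine tsum_congr fun i => ?_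
      rw [Submodule.inner_starProjection_left_eq_right,
        Submodule.starProjection_eq_self_iff.mpr hy]
  · rintro ⟨x, y, hx, hs, hle, hy, hy1, rfl⟩
    have hsum : Summable fun i => ω i • x i := by
      refine Summable.of_norm_bounded (hωsum.summable.add hs) fun i => ?_
      rw [norm_smul, Real.norm_of_nonneg (hω i).le]
      have := mul_nonneg (hω i).le (add_nonneg (sq_nonneg (‖x i‖ - 1)) (sq_nonneg ‖x i‖))
      have := mul_nonneg (hω i).le (sq_nonneg (‖x i‖ - 1))
      nlinarith [hω i]
    refine ⟨x, y, fun i => (hx i).1, hs, hle, hsum, ?_, hy, hy1, rfl⟩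
    exact K.isClosed_orthogonal.mem_of_tendsto hsum.hasSum
      (Filter.Eventually.of_forall fun s => Kᗮ.sum_mem fun i _ => Kᗮ.smul_mem _ (hx i).2)
end

section
/- The following two suprema coincide: sSup { ∑ᵢ ω i ⟪xᵢ, y⟫ : x : ι → H with xᵢ ∈ Mᵢ and ‖xᵢ‖ ≤ 1 for all i, the (absolutely convergent) series ∑ᵢ ω i • xᵢ lies in M^⊥, and y ∈ M^⊥ with ‖y‖ ≤ 1 } = sSup { ∑ᵢ ω i ⟪xᵢ, y⟫ : x : ι → H with xᵢ ∈ Mᵢ ∩ M^⊥ and ‖xᵢ‖ ≤ 1 for all i, and y ∈ M^⊥ with ‖y‖ ≤ 1 }. (The left-hand supremum is the configuration constant between the product subspace C_ω = ∏ᵢ Mᵢ and the diagonal D_ω in the ω-weighted ℓ² product space over H.) -/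
open RealInnerProductSpace

/-- The supremum defining the configuration constant between the
product space `∏ᵢ Mᵢ` and the diagonal (left-hand side) equals the supremum
taken over families with components in `Mᵢ ∩ M^⊥` (right-hand side). -/
theorem stmt_5 {H : Type*} [NormedAddCommGroup H] [InnerProductSpace ℝ H] [CompleteSpace H]
    {ι : Type*} [Countable ι] [Nonempty ι]
    (ω : ι → ℝ) (hω : ∀ i, 0 < ω i) (hωsum : HasSum ω 1)
    (M : ι → Submodule ℝ H) [∀ i, CompleteSpace (M i)]
    (hMnt : ∀ i, M i ≠ ⊥) :
    sSup { r : ℝ | ∃ (x : ι → H) (y : H),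
      (∀ i, x i ∈ M i) ∧ (∀ i, ‖x i‖ ≤ 1) ∧
      (Summable fun i => ω i • x i) ∧ (∑' i, ω i • x i) ∈ (⨅ j, M j : Submodule ℝ H)ᗮ ∧
      y ∈ (⨅ j, M j : Submodule ℝ H)ᗮ ∧ ‖y‖ ≤ 1 ∧
      r = ∑' i, ω i * ⟪x i, y⟫ } =
    sSup { r : ℝ | ∃ (x : ι → H) (y : H),
      (∀ i, x i ∈ M i ⊓ (⨅ j, M j : Submodule ℝ H)ᗮ) ∧ (∀ i, ‖x i‖ ≤ 1) ∧
      y ∈ (⨅ j, M j : Submodule ℝ H)ᗮ ∧ ‖y‖ ≤ 1 ∧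
      r = ∑' i, ω i * ⟪x i, y⟫ } := by
  have hcl : IsClosed ((⨅ j, M j : Submodule ℝ H) : Set H) := by
    rw [Submodule.coe_iInf]
    exact isClosed_iInter fun j => (completeSpace_coe_iff_isComplete.mp inferInstance :
      IsComplete ((M j : Submodule ℝ H) : Set H)).isClosed
  have hle : ∀ i, (⨅ j, M j : Submodule ℝ H) ≤ M i := fun i => iInf_le _ i
  generalize (⨅ j, M j : Submodule ℝ H) = N at hcl hle ⊢
  haveI : CompleteSpace N := hcl.completeSpace_coe
  congr 1
  ext r
  constructor
  · rintro ⟨x, y, hx, hx1, -, -, hy, hy1, rfl⟩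
    have key : ∀ i, x i - N.starProjection (x i) ∈ Nᗮ := fun i =>
      Submodule.sub_starProjection_mem_orthogonal (x i)
    have hmem : ∀ i, N.starProjection (x i) ∈ N := fun i =>
      Submodule.starProjection_apply_mem N (x i)
    refine ⟨fun i => x i - N.starProjection (x i), y, fun i => ⟨?_, key i⟩, fun i => ?_,
      hy, hy1, ?_⟩
    · exact (M i).sub_mem (hx i) (hle i (hmem i))
    · have h0 : ⟪N.starProjection (x i), x i - N.starProjection (x i)⟫ = 0 := key i _ (hmem i)
      have h1 := norm_add_sq_eq_norm_sq_add_norm_sq_of_inner_eq_zero _ _ h0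
      rw [add_sub_cancel] at h1
      have h2 := hx1 i
      nlinarith [norm_nonneg (x i), norm_nonneg (x i - N.starProjection (x i)),
        mul_self_nonneg ‖N.starProjection (x i)‖]
    · refine tsum_congr fun i => ?_
      rw [inner_sub_left, hy _ (hmem i), sub_zero]
  · rintro ⟨x, y, hx, hx1, hy, hy1, rfl⟩
    have hs : Summable fun i => ω i • x i := by
      refine Summable.of_norm_bounded hωsum.summable fun i => ?_
      rw [norm_smul, Real.norm_of_nonneg (hω i).le]
      exact mul_le_of_le_one_right (hω i).le (hx1 i)
    refine ⟨x, y, fun i => (hx i).1, hx1, hs, ?_, hy, hy1, rfl⟩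
    exact (Submodule.isClosed_orthogonal N).mem_of_tendsto hs.hasSum
      (Filter.Eventually.of_forall fun s => Nᗮ.sum_mem fun i _ => Nᗮ.smul_mem _ (hx i).2)
end

section
/- The Friedrichs cosine c_ω and the configuration constant κ_ω satisfy the estimates c_ω² ≤ κ_ω ≤ c_ω. -/
open RealInnerProductSpace

/-- The cosine of the Friedrichs angle between the product subspace `∏ᵢ Mᵢ` and the
diagonal in the `ω`-weighted `ℓ²` product space, expressed intrinsically in `H`. -/
noncomputable def friedrichsCos {H : Type*} [NormedAddCommGroup H] [InnerProductSpace ℝ H]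
    {ι : Type*} (ω : ι → ℝ) (M : ι → Submodule ℝ H) : ℝ :=
  sSup { r : ℝ | ∃ (x : ι → H) (y : H),
    (∀ i, x i ∈ M i ⊓ (⨅ j, M j)ᗮ) ∧
    (Summable fun i => ω i * ‖x i‖ ^ 2) ∧ (∑' i, ω i * ‖x i‖ ^ 2) ≤ 1 ∧
    y ∈ (⨅ j, M j)ᗮ ∧ ‖y‖ ≤ 1 ∧
    r = ∑' i, ω i * ⟪x i, y⟫ }

/-- The configuration constant between the product subspace `∏ᵢ Mᵢ` and the diagonal
in the `ω`-weighted `ℓ²` product space, expressed intrinsically in `H`. -/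
noncomputable def configConst {H : Type*} [NormedAddCommGroup H] [InnerProductSpace ℝ H]
    {ι : Type*} (ω : ι → ℝ) (M : ι → Submodule ℝ H) : ℝ :=
  sSup { r : ℝ | ∃ (x : ι → H) (y : H),
    (∀ i, x i ∈ M i ⊓ (⨅ j, M j)ᗮ) ∧ (∀ i, ‖x i‖ ≤ 1) ∧
    y ∈ (⨅ j, M j)ᗮ ∧ ‖y‖ ≤ 1 ∧
    r = ∑' i, ω i * ⟪x i, y⟫ }

/-- `c_ω² ≤ κ_ω ≤ c_ω`. -/
theorem stmt_6 {H : Type*} [NormedAddCommGroup H] [InnerProductSpace ℝ H] [CompleteSpace H]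
    {ι : Type*} [Countable ι] [Nonempty ι]
    (ω : ι → ℝ) (hω : ∀ i, 0 < ω i) (hωsum : HasSum ω 1)
    (M : ι → Submodule ℝ H) [∀ i, CompleteSpace (M i)]
    (hMnt : ∀ i, M i ≠ ⊥) :
    friedrichsCos ω M ^ 2 ≤ configConst ω M ∧ configConst ω M ≤ friedrichsCos ω M := by
  have hs : Summable ω := hωsum.summable
  have hbd : ∀ (a b : H), ‖a‖ ≤ 1 → ‖b‖ ≤ 1 → |⟪a, b⟫| ≤ 1 := fun a b ha hb =>
    (abs_real_inner_le_norm a b).trans (mul_le_one₀ ha (norm_nonneg _) hb)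
  have hsumm : ∀ (x : ι → H) (y : H), (∀ i, ‖x i‖ ≤ 1) → ‖y‖ ≤ 1 →
      Summable (fun i => ω i * ⟪x i, y⟫) := by
    intro x y hx hy
    refine Summable.of_norm_bounded hs (fun i => ?_)
    rw [Real.norm_eq_abs, abs_mul, abs_of_pos (hω i)]
    exact mul_le_of_le_one_right (hω i).le (hbd _ _ (hx i) hy)
  have hκbdd : BddAbove { r : ℝ | ∃ (x : ι → H) (y : H),
      (∀ i, x i ∈ M i ⊓ (⨅ j, M j)ᗮ) ∧ (∀ i, ‖x i‖ ≤ 1) ∧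
      y ∈ (⨅ j, M j)ᗮ ∧ ‖y‖ ≤ 1 ∧ r = ∑' i, ω i * ⟪x i, y⟫ } := by
    refine ⟨1, ?_⟩
    rintro r ⟨x, y, -, hx, -, hy, rfl⟩
    rw [← hωsum.tsum_eq]
    refine (hsumm x y hx hy).tsum_le_tsum (fun i => ?_) hs
    exact mul_le_of_le_one_right (hω i).le ((le_abs_self _).trans (hbd _ _ (hx i) hy))
  have hkey : ∀ r : ℝ, (∃ (x : ι → H) (y : H),
      (∀ i, x i ∈ M i ⊓ (⨅ j, M j)ᗮ) ∧
      (Summable fun i => ω i * ‖x i‖ ^ 2) ∧ (∑' i, ω i * ‖x i‖ ^ 2) ≤ 1 ∧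
      y ∈ (⨅ j, M j)ᗮ ∧ ‖y‖ ≤ 1 ∧ r = ∑' i, ω i * ⟪x i, y⟫) →
      r ^ 2 ≤ configConst ω M := by
    rintro r ⟨x, y, hx, hxs, hx1, hyM, hy, hr⟩
    have hcl : ∀ i, CompleteSpace (M i ⊓ (⨅ j, M j)ᗮ : Submodule ℝ H) := by
      intro i
      have h1 : IsClosed ((M i : Submodule ℝ H) : Set H) :=
        (completeSpace_coe_iff_isComplete.1 (inferInstance : CompleteSpace (M i))).isClosed
      have h2 : IsClosed (((⨅ j, M j)ᗮ : Submodule ℝ H) : Set H) :=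
        Submodule.isClosed_orthogonal _
      exact (h1.inter h2).completeSpace_coe
    have hex : ∀ i, ∃ p : H, p ∈ M i ⊓ (⨅ j, M j)ᗮ ∧ ‖p‖ ≤ 1 ∧ ⟪p, y⟫ = ‖p‖ ^ 2 ∧
        ⟪x i, y⟫ = ⟪x i, p⟫ := by
      intro i
      obtain ⟨p, hp, z, hz, hyz⟩ :=
        (M i ⊓ (⨅ j, M j)ᗮ : Submodule ℝ H).exists_add_mem_mem_orthogonal y
      have e1 : ⟪p, y⟫ = ‖p‖ ^ 2 := by
        rw [hyz, inner_add_right, hz p hp, real_inner_self_eq_norm_sq, add_zero]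
      refine ⟨p, hp, ?_, e1, ?_⟩
      · have := real_inner_le_norm p y
        nlinarith [norm_nonneg p, norm_nonneg y]
      · rw [hyz, inner_add_right, hz _ (hx i), add_zero]
    choose p hpM hp1 hpy hxp using hex
    have hps := hsumm p y hp1 hy
    have hpt : ∀ (t : ℝ) (i : ι), 2 * t * ⟪x i, y⟫ ≤ t ^ 2 * ‖x i‖ ^ 2 + ⟪p i, y⟫ := by
      intro t i
      rw [hxp, hpy]
      have h := real_inner_self_nonneg (x := t • x i - p i)
      rw [real_inner_self_eq_norm_sq, norm_sub_sq_real, real_inner_smul_left, norm_smul,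
        mul_pow, Real.norm_eq_abs, sq_abs] at h
      linarith
    have hxy : Summable (fun i => ω i * ⟪x i, y⟫) := by
      refine Summable.of_norm_bounded (hxs.add hps) (fun i => ?_)
      have h1 := hpt 1 i
      have h2 := hpt (-1) i
      have h3 : 0 ≤ ‖x i‖ ^ 2 := sq_nonneg _
      have h4 : 0 ≤ ⟪p i, y⟫ := by rw [hpy]; exact sq_nonneg _
      rw [Real.norm_eq_abs, abs_mul, abs_of_pos (hω i), ← mul_add]
      refine mul_le_mul_of_nonneg_left (abs_le.2 ⟨?_, ?_⟩) (hω i).le <;> nlinarith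
    have hle : 2 * r * r ≤ r ^ 2 * (∑' i, ω i * ‖x i‖ ^ 2) + ∑' i, ω i * ⟪p i, y⟫ := by
      have := (hxy.mul_left (2 * r)).tsum_le_tsum (fun i => ?_) ((hxs.mul_left (r ^ 2)).add hps)
      · rwa [tsum_mul_left, (hxs.mul_left (r ^ 2)).tsum_add hps, tsum_mul_left, ← hr] at this
      · have := mul_le_mul_of_nonneg_left (hpt r i) (hω i).le
        linarith
    have hκ : ∑' i, ω i * ⟪p i, y⟫ ≤ configConst ω M :=
      le_csSup hκbdd ⟨p, y, hpM, hp1, hyM, hy, rfl⟩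
    nlinarith [mul_le_mul_of_nonneg_left hx1 (sq_nonneg r)]
  have hκ0 : 0 ≤ configConst ω M :=
    le_csSup hκbdd ⟨fun _ => 0, 0, by simp, by simp, by simp, by simp, by simp⟩
  have hb : ∀ r ∈ { r : ℝ | ∃ (x : ι → H) (y : H),
      (∀ i, x i ∈ M i ⊓ (⨅ j, M j)ᗮ) ∧
      (Summable fun i => ω i * ‖x i‖ ^ 2) ∧ (∑' i, ω i * ‖x i‖ ^ 2) ≤ 1 ∧
      y ∈ (⨅ j, M j)ᗮ ∧ ‖y‖ ≤ 1 ∧ r = ∑' i, ω i * ⟪x i, y⟫ },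
      r ≤ √(configConst ω M) := fun r hr => Real.le_sqrt_of_sq_le (hkey r hr)
  constructor
  · have h0 : 0 ≤ friedrichsCos ω M :=
      le_csSup ⟨_, hb⟩ ⟨fun _ => 0, 0, by simp, by simpa using summable_zero, by simp, by simp,
        by simp, by simp⟩
    have h1 : friedrichsCos ω M ≤ √(configConst ω M) :=
      csSup_le ⟨0, fun _ => 0, 0, by simp, by simpa using summable_zero, by simp, by simp,
        by simp, by simp⟩ hb
    exact (Real.le_sqrt h0 hκ0).1 h1
  · refine csSup_le_csSup ⟨_, hb⟩
      ⟨0, fun _ => 0, 0, by simp, by simp, by simp, by simp, by simp⟩ ?_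
    rintro r ⟨x, y, hx, hx1, hyM, hy, hr⟩
    have hle : ∀ i, ω i * ‖x i‖ ^ 2 ≤ ω i := fun i =>
      mul_le_of_le_one_right (hω i).le (pow_le_one₀ (norm_nonneg _) (hx1 i))
    have hsx : Summable fun i => ω i * ‖x i‖ ^ 2 :=
      Summable.of_nonneg_of_le (fun i => mul_nonneg (hω i).le (sq_nonneg _)) hle hs
    refine ⟨x, y, hx, hsx, ?_, hyM, hy, hr⟩
    rw [← hωsum.tsum_eq]
    exact hsx.tsum_le_tsum hle hs
end

section
/- Assume there exists j ∈ ι with Mⱼ ≠ M. Then the Friedrichs cosine admits the alternative expressions c_ω = sSup { ‖∑ᵢ ω i • xᵢ‖ : x : ι → H with xᵢ ∈ Mᵢ ∩ M^⊥ for all i and ∑ᵢ ω i ‖xᵢ‖² = 1 } and c_ω = sSup { ‖∑ᵢ ω i • xᵢ‖ / √(∑ᵢ ω i ‖xᵢ‖²) : x : ι → H with xᵢ ∈ Mᵢ ∩ M^⊥ for all i and 0 < ∑ᵢ ω i ‖xᵢ‖² < ∞ }. -/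
open RealInnerProductSpace

theorem aux_summable {H : Type*} [NormedAddCommGroup H] [InnerProductSpace ℝ H] [CompleteSpace H]
    {ι : Type*} (ω : ι → ℝ) (hω : ∀ i, 0 < ω i) (hωsum : HasSum ω 1) (x : ι → H)
    (hx : Summable fun i => ω i * ‖x i‖ ^ 2) :
    Summable (fun i => ω i • x i) ∧
      ‖∑' i, ω i • x i‖ ≤ (1 + ∑' i, ω i * ‖x i‖ ^ 2) / 2 := by
  have hs : HasSum (fun i => (ω i + ω i * ‖x i‖ ^ 2) / 2) ((1 + ∑' i, ω i * ‖x i‖ ^ 2) / 2) :=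
    (hωsum.add hx.hasSum).div_const 2
  have hb : ∀ i, ‖ω i • x i‖ ≤ (ω i + ω i * ‖x i‖ ^ 2) / 2 := by
    intro i
    rw [norm_smul, Real.norm_eq_abs, abs_of_pos (hω i)]
    nlinarith [mul_nonneg (hω i).le (sq_nonneg (‖x i‖ - 1))]
  exact ⟨Summable.of_norm_bounded hs.summable hb, tsum_of_norm_bounded hs hb⟩

theorem aux_scale {H : Type*} [NormedAddCommGroup H] [InnerProductSpace ℝ H] [CompleteSpace H]
    {ι : Type*} (ω : ι → ℝ) (K : ι → Submodule ℝ H) (x : ι → H) (hxK : ∀ i, x i ∈ K i)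
    (hx : Summable fun i => ω i * ‖x i‖ ^ 2) (hpos : 0 < ∑' i, ω i * ‖x i‖ ^ 2) :
    ∃ z : ι → H, (∀ i, z i ∈ K i) ∧ (Summable fun i => ω i * ‖z i‖ ^ 2) ∧
      (∑' i, ω i * ‖z i‖ ^ 2) = 1 ∧
      ‖∑' i, ω i • x i‖ / Real.sqrt (∑' i, ω i * ‖x i‖ ^ 2) = ‖∑' i, ω i • z i‖ := by
  set t := ∑' i, ω i * ‖x i‖ ^ 2 with ht
  have hst : 0 < Real.sqrt t := Real.sqrt_pos.mpr hpos
  have e : (fun i => ω i * ‖(Real.sqrt t)⁻¹ • x i‖ ^ 2) = fun i => t⁻¹ * (ω i * ‖x i‖ ^ 2) := by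
    funext i
    rw [norm_smul, mul_pow, Real.norm_eq_abs, sq_abs, inv_pow, Real.sq_sqrt hpos.le]
    ring
  refine ⟨fun i => (Real.sqrt t)⁻¹ • x i, fun i => (K i).smul_mem _ (hxK i), ?_, ?_, ?_⟩
  · rw [e]; exact hx.mul_left _
  · rw [e, tsum_mul_left, ← ht]; exact inv_mul_cancel₀ hpos.ne'
  · have : (fun i => ω i • (Real.sqrt t)⁻¹ • x i) = fun i => (Real.sqrt t)⁻¹ • (ω i • x i) := by
      funext i; rw [smul_comm]
    rw [this, tsum_const_smul'', norm_smul, Real.norm_eq_abs, abs_of_pos (inv_pos.mpr hst)]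
    rw [div_eq_inv_mul]

/-- If some `Mⱼ ≠ M`, then the Friedrichs cosine admits the
alternative expressions as suprema of norms of weighted averages. -/
theorem stmt_7 {H : Type*} [NormedAddCommGroup H] [InnerProductSpace ℝ H] [CompleteSpace H]
    {ι : Type*} [Countable ι] [Nonempty ι]
    (ω : ι → ℝ) (hω : ∀ i, 0 < ω i) (hωsum : HasSum ω 1)
    (M : ι → Submodule ℝ H) [∀ i, CompleteSpace (M i)]
    (hMnt : ∀ i, M i ≠ ⊥)
    (hj : ∃ j, M j ≠ ⨅ i, M i) :
    friedrichsCos ω M =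
      sSup { r : ℝ | ∃ x : ι → H,
        (∀ i, x i ∈ M i ⊓ (⨅ j, M j : Submodule ℝ H)ᗮ) ∧
        (Summable fun i => ω i * ‖x i‖ ^ 2) ∧ (∑' i, ω i * ‖x i‖ ^ 2) = 1 ∧
        r = ‖∑' i, ω i • x i‖ } ∧
    friedrichsCos ω M =
      sSup { r : ℝ | ∃ x : ι → H,
        (∀ i, x i ∈ M i ⊓ (⨅ j, M j : Submodule ℝ H)ᗮ) ∧
        (Summable fun i => ω i * ‖x i‖ ^ 2) ∧ 0 < (∑' i, ω i * ‖x i‖ ^ 2) ∧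
        r = ‖∑' i, ω i • x i‖ / Real.sqrt (∑' i, ω i * ‖x i‖ ^ 2) } := by
  classical
  set N : Submodule ℝ H := ⨅ j, M j with hN
  have hNc : IsClosed (N : Set H) := by
    rw [hN, Submodule.coe_iInf]
    refine isClosed_iInter fun i => ?_
    exact (completeSpace_coe_iff_isComplete.mp (inferInstance : CompleteSpace (M i))).isClosed
  haveI : CompleteSpace N := hNc.completeSpace_coe
  have hset : { r : ℝ | ∃ x : ι → H,
        (∀ i, x i ∈ M i ⊓ Nᗮ) ∧
        (Summable fun i => ω i * ‖x i‖ ^ 2) ∧ (∑' i, ω i * ‖x i‖ ^ 2) = 1 ∧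
        r = ‖∑' i, ω i • x i‖ } = { r : ℝ | ∃ x : ι → H,
        (∀ i, x i ∈ M i ⊓ Nᗮ) ∧
        (Summable fun i => ω i * ‖x i‖ ^ 2) ∧ 0 < (∑' i, ω i * ‖x i‖ ^ 2) ∧
        r = ‖∑' i, ω i • x i‖ / Real.sqrt (∑' i, ω i * ‖x i‖ ^ 2) } := by
    ext r
    constructor
    · rintro ⟨x, h1, h2, h3, rfl⟩
      exact ⟨x, h1, h2, by rw [h3]; exact one_pos, by rw [h3]; simp⟩
    · rintro ⟨x, h1, h2, h3, rfl⟩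
      exact aux_scale ω (fun i => M i ⊓ Nᗮ) x h1 h2 h3
  rw [← hset, and_self]
  have hbdd2 : ∀ x : ι → H, (Summable fun i => ω i * ‖x i‖ ^ 2) →
      (∑' i, ω i * ‖x i‖ ^ 2) ≤ 1 → ‖∑' i, ω i • x i‖ ≤ 1 := by
    intro x h1 h2
    have := (aux_summable ω hω hωsum x h1).2
    linarith
  have hinner : ∀ (x : ι → H) (y : H), (Summable fun i => ω i * ‖x i‖ ^ 2) →
      ∑' i, ω i * ⟪x i, y⟫ = ⟪∑' i, ω i • x i, y⟫ := by
    intro x y h1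
    have hs := (aux_summable ω hω hωsum x h1).1
    have h := ((innerSL ℝ y).hasSum hs.hasSum).tsum_eq
    rw [real_inner_comm, ← innerSL_apply_apply ℝ, ← h]
    refine tsum_congr fun i => ?_
    simp [inner_smul_right, real_inner_comm]
  have hle : ∀ (x : ι → H) (y : H), (Summable fun i => ω i * ‖x i‖ ^ 2) → ‖y‖ ≤ 1 →
      ∑' i, ω i * ⟪x i, y⟫ ≤ ‖∑' i, ω i • x i‖ := by
    intro x y h1 hy
    rw [hinner x y h1]
    exact (real_inner_le_norm _ _).trans (mul_le_of_le_one_right (norm_nonneg _) hy)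
  have hne : { r : ℝ | ∃ x : ι → H,
        (∀ i, x i ∈ M i ⊓ Nᗮ) ∧
        (Summable fun i => ω i * ‖x i‖ ^ 2) ∧ (∑' i, ω i * ‖x i‖ ^ 2) = 1 ∧
        r = ‖∑' i, ω i • x i‖ }.Nonempty := by
    obtain ⟨j, hj⟩ := hj
    have hNj : N ≤ M j := iInf_le _ j
    have hbot : M j ⊓ Nᗮ ≠ ⊥ := by
      intro hb
      have := Submodule.sup_orthogonal_inf_of_hasOrthogonalProjection hNj
      rw [inf_comm, hb, sup_bot_eq] at this
      exact hj this.symm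
    obtain ⟨u, hu, hu0⟩ := (Submodule.ne_bot_iff _).mp hbot
    have hh : HasSum (fun i => ω i * ‖(Pi.single j u : ι → H) i‖ ^ 2) (ω j * ‖u‖ ^ 2) := by
      have := hasSum_single (f := fun i => ω i * ‖(Pi.single j u : ι → H) i‖ ^ 2) j
        (by intro i hi; simp [Pi.single_eq_of_ne hi])
      simpa using this
    have hpos : 0 < ω j * ‖u‖ ^ 2 := mul_pos (hω j) (pow_pos (norm_pos_iff.mpr hu0) 2)
    obtain ⟨z, hz1, hz2, hz3, -⟩ := aux_scale ω (fun i => M i ⊓ Nᗮ) (Pi.single j u)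
      (by
        intro i
        by_cases h : i = j
        · subst h; simpa using hu
        · rw [Pi.single_eq_of_ne h]; exact Submodule.zero_mem _)
      hh.summable (by rw [hh.tsum_eq]; exact hpos)
    exact ⟨_, z, hz1, hz2, hz3, rfl⟩
  unfold friedrichsCos
  apply le_antisymm
  · refine csSup_le ⟨_, fun _ => 0, 0, ?_, ?_, ?_, ?_, ?_, rfl⟩ ?_
    · intro i; exact Submodule.zero_mem _
    · simpa using summable_zero
    · simp
    · exact Submodule.zero_mem _
    · simp
    · rintro r ⟨x, y, h1, h2, h3, h4, h5, rfl⟩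
      refine (hle x y h2 h5).trans ?_
      rcases (tsum_nonneg fun i => mul_nonneg (hω i).le (sq_nonneg ‖x i‖)).eq_or_lt with h0 | h0
      · have hz := (hasSum_zero_iff_of_nonneg
          (fun i => mul_nonneg (hω i).le (sq_nonneg ‖x i‖))).mp (h0 ▸ h2.hasSum)
        have hx0 : ∀ i, x i = 0 := by
          intro i
          have := congrFun hz i
          simpa [(hω i).ne'] using this
        simp only [hx0, smul_zero, tsum_zero, norm_zero]
        refine Real.sSup_nonneg ?_
        rintro r ⟨z, -, -, -, rfl⟩
        exact norm_nonneg _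
      · obtain ⟨z, hz1, hz2, hz3, hz4⟩ := aux_scale ω (fun i => M i ⊓ Nᗮ) x h1 h2 h0
        have hle1 : ‖∑' i, ω i • x i‖ ≤
            ‖∑' i, ω i • x i‖ / Real.sqrt (∑' i, ω i * ‖x i‖ ^ 2) :=
          le_div_self (norm_nonneg _) (Real.sqrt_pos.mpr h0) (Real.sqrt_le_one.mpr h3)
        refine hle1.trans (le_csSup ⟨1, ?_⟩ ⟨z, hz1, hz2, hz3, hz4⟩)
        rintro r ⟨w, -, hw2, hw3, rfl⟩
        exact hbdd2 w hw2 hw3.le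
  · refine csSup_le_csSup ⟨1, ?_⟩ hne ?_
    · rintro r ⟨x, y, h1, h2, h3, h4, h5, rfl⟩
      exact (hle x y h2 h5).trans (hbdd2 x h2 h3)
    · rintro r ⟨x, h1, h2, h3, rfl⟩
      have hs := (aux_summable ω hω hωsum x h2).1
      have hv : ∑' i, ω i • x i ∈ Nᗮ :=
        by
        rw [Submodule.mem_orthogonal']
        intro y hy
        rw [← hinner x y h2]
        have : ∀ i, ω i * ⟪x i, y⟫ = 0 := fun i => by
          rw [(Submodule.mem_orthogonal' _ _).mp (h1 i).2 y hy, mul_zero]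
        simp [this]
      refine ⟨x, ‖∑' i, ω i • x i‖⁻¹ • ∑' i, ω i • x i, h1, h2, h3.le,
        Submodule.smul_mem _ _ hv, ?_, ?_⟩
      · rw [norm_smul, norm_inv, norm_norm]
        exact inv_mul_le_one
      · rw [hinner x _ h2, inner_smul_right, real_inner_self_eq_norm_sq, sq]
        by_cases h : ‖∑' i, ω i • x i‖ = 0
        · rw [h]; simp
        · rw [inv_mul_cancel_left₀ h]
end

section
/- Let J be a nonempty countable index set, let {I_j}_{j ∈ J} be a family of nonempty pairwise disjoint subsets of ι with ⋃_{j∈J} I_j = ι, let L_j ⊆ H (j ∈ J) be nontrivial closed linear subspaces such that Mᵢ = L_j for every i ∈ I_j, and set λ_j := ∑_{i ∈ I_j} ω i, so that λ : J → ℝ is a weight family with λ_j > 0 and ∑_j λ_j = 1 and ⋂_j L_j = M. Then the Friedrichs cosine computed from the family (L_j)_{j∈J} with weights λ equals c_ω, and the configuration constant computed from (L_j)_{j∈J} with weights λ equals κ_ω. -/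
open RealInnerProductSpace

theorem aux_summable_smul {H : Type*} [NormedAddCommGroup H] [InnerProductSpace ℝ H]
    [CompleteSpace H] {ι : Type*} (ω : ι → ℝ) (hω : ∀ i, 0 < ω i) (hs : Summable ω)
    (x : ι → H) (hx : Summable fun i => ω i * ‖x i‖ ^ 2) : Summable fun i => ω i • x i := by
  refine Summable.of_norm_bounded (hs.add hx) fun i => ?_
  rw [norm_smul, Real.norm_of_nonneg (hω i).le]
  nlinarith [hω i, mul_nonneg (hω i).le (sq_nonneg (‖x i‖ - 1)),
    mul_nonneg (hω i).le (sq_nonneg (‖x i‖))]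

theorem aux_hasSum_inner {H : Type*} [NormedAddCommGroup H] [InnerProductSpace ℝ H]
    [CompleteSpace H] {ι : Type*} (ω : ι → ℝ) (x : ι → H) (y : H)
    (h : Summable fun i => ω i • x i) :
    HasSum (fun i => ω i * ⟪x i, y⟫) ⟪∑' i, ω i • x i, y⟫ := by
  have := h.hasSum.mapL (innerSL ℝ y)
  simpa [innerSL_apply_apply, inner_smul_right, real_inner_comm] using this

/-- Averages over one block. -/
theorem aux_block {H : Type*} [NormedAddCommGroup H] [InnerProductSpace ℝ H]
    [CompleteSpace H] {ι : Type*} [Nonempty ι] (ω : ι → ℝ) (hω : ∀ i, 0 < ω i) (hs : Summable ω)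
    (K : Submodule ℝ H) (hK : IsClosed (K : Set H)) (x : ι → H) (hxK : ∀ i, x i ∈ K)
    (hx : Summable fun i => ω i * ‖x i‖ ^ 2) :
    ∃ z : H, z ∈ K ∧ (∑' i, ω i) * ‖z‖ ^ 2 ≤ ∑' i, ω i * ‖x i‖ ^ 2 ∧
      ∀ y, (∑' i, ω i) * ⟪z, y⟫ = ∑' i, ω i * ⟪x i, y⟫ := by
  have hsm := aux_summable_smul ω hω hs x hx
  have hl : 0 < ∑' i, ω i := hs.tsum_pos (fun i => (hω i).le) (Classical.arbitrary ι) (hω _)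
  set l := ∑' i, ω i with hldef
  have key : ∀ y, l * ⟪l⁻¹ • ∑' i, ω i • x i, y⟫ = ∑' i, ω i * ⟪x i, y⟫ := by
    intro y
    rw [(aux_hasSum_inner ω x y hsm).tsum_eq, real_inner_smul_left, mul_inv_cancel_left₀ hl.ne']
  refine ⟨l⁻¹ • ∑' i, ω i • x i, ?_, ?_, key⟩
  · refine K.smul_mem _ ?_
    exact hK.mem_of_tendsto hsm.hasSum
      (Filter.Eventually.of_forall fun s => K.sum_mem fun i _ => K.smul_mem _ (hxK i))
  · set z := l⁻¹ • ∑' i, ω i • x i with hz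
    have h1 : HasSum (fun i => ω i * ⟪x i, z⟫) (l * ⟪z, z⟫) := by
      rw [key z]; exact (aux_hasSum_inner ω x z hsm).summable.hasSum
    have h2 : HasSum (fun i => 2 * (ω i * ⟪x i, z⟫) - ω i * ‖z‖ ^ 2)
        (2 * (l * ⟪z, z⟫) - l * ‖z‖ ^ 2) :=
      (h1.mul_left 2).sub (hs.hasSum.mul_right _)
    have h3 := hasSum_le (fun i => ?_) h2 hx.hasSum
    · rw [real_inner_self_eq_norm_sq] at h3; linarith
    · have := mul_nonneg (hω i).le (sq_nonneg ‖x i - z‖)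
      rw [norm_sub_sq_real] at this
      linarith

theorem aux_fiber {ι J : Type*} (f : ι → J) (ω : ι → ℝ) (g : J → ℝ) (h : ι → ℝ)
    (hg : ∀ i, h i = ω i * g (f i)) (j : J) :
    (∑' i : f ⁻¹' {j}, h i) = (∑' i : f ⁻¹' {j}, ω i) * g j := by
  rw [← tsum_mul_right]
  refine tsum_congr fun i => ?_
  rw [hg]
  have : f i = j := i.2
  rw [this]

theorem aux_summable_lift {ι J : Type*} (f : ι → J) (ω : ι → ℝ) (hω : ∀ i, 0 < ω i)
    (hs : Summable ω) (g : J → ℝ) (hg : ∀ j, 0 ≤ g j)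
    (h : Summable fun j => (∑' i : f ⁻¹' {j}, ω i) * g j) :
    Summable fun i => ω i * g (f i) := by
  rw [← (Equiv.sigmaFiberEquiv f).summable_iff]
  rw [summable_sigma_of_nonneg]
  · constructor
    · intro j
      have : Summable fun i : {i // f i = j} => ω i * g j :=
        (hs.comp_injective Subtype.val_injective).mul_right _
      refine this.congr fun i => ?_
      simp [i.2]
    · refine h.congr fun j => ?_
      exact (aux_fiber f ω g (fun i => ω i * g (f i)) (fun _ => rfl) j).symm
  · intro i; exact mul_nonneg (hω _).le (hg _)

/-- From blocks to points. -/
theorem aux_up {H : Type*} [NormedAddCommGroup H] [InnerProductSpace ℝ H] [CompleteSpace H]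
    {ι J : Type*} (f : ι → J) (ω : ι → ℝ) (hω : ∀ i, 0 < ω i) (hs : Summable ω)
    (x : J → H) (y : H)
    (hx : Summable fun j => (∑' i : f ⁻¹' {j}, ω i) * ‖x j‖ ^ 2) :
    (Summable fun i => ω i * ‖x (f i)‖ ^ 2) ∧
    (∑' i, ω i * ‖x (f i)‖ ^ 2) = ∑' j, (∑' i : f ⁻¹' {j}, ω i) * ‖x j‖ ^ 2 ∧
    (∑' j, (∑' i : f ⁻¹' {j}, ω i) * ⟪x j, y⟫) = ∑' i, ω i * ⟪x (f i), y⟫ := by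
  have h1 : Summable fun i => ω i * ‖x (f i)‖ ^ 2 :=
    aux_summable_lift f ω hω hs (fun j => ‖x j‖ ^ 2) (fun _ => sq_nonneg _) hx
  refine ⟨h1, ?_, ?_⟩
  · rw [← (h1.hasSum.tsum_fiberwise f).tsum_eq]
    exact tsum_congr fun j => aux_fiber f ω (fun j => ‖x j‖ ^ 2) _ (fun _ => rfl) j
  · have h2 := (aux_hasSum_inner ω (fun i => x (f i)) y (aux_summable_smul ω hω hs _ h1)).summable
    rw [← (h2.hasSum.tsum_fiberwise f).tsum_eq]
    exact tsum_congr fun j => (aux_fiber f ω (fun j => ⟪x j, y⟫) _ (fun _ => rfl) j).symm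

/-- From points to blocks. -/
theorem aux_down {H : Type*} [NormedAddCommGroup H] [InnerProductSpace ℝ H] [CompleteSpace H]
    {ι J : Type*} (f : ι → J) (hf : Function.Surjective f)
    (ω : ι → ℝ) (hω : ∀ i, 0 < ω i) (hs : Summable ω)
    (K : J → Submodule ℝ H) (hK : ∀ j, IsClosed (K j : Set H))
    (x : ι → H) (y : H) (hxK : ∀ i, x i ∈ K (f i))
    (hx : Summable fun i => ω i * ‖x i‖ ^ 2) :
    ∃ z : J → H, (∀ j, z j ∈ K j) ∧
      (∀ j, (∑' i : f ⁻¹' {j}, ω i) * ‖z j‖ ^ 2 ≤ ∑' i : f ⁻¹' {j}, ω i * ‖x i‖ ^ 2) ∧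
      (∑' i, ω i * ⟪x i, y⟫) = ∑' j, (∑' i : f ⁻¹' {j}, ω i) * ⟪z j, y⟫ := by
  have hb : ∀ j, ∃ z : H, z ∈ K j ∧
      (∑' i : f ⁻¹' {j}, ω i) * ‖z‖ ^ 2 ≤ ∑' i : f ⁻¹' {j}, ω i * ‖x i‖ ^ 2 ∧
      ∀ y, (∑' i : f ⁻¹' {j}, ω i) * ⟪z, y⟫ = ∑' i : f ⁻¹' {j}, ω i * ⟪x i, y⟫ := by
    intro j
    obtain ⟨i, hi⟩ := hf j
    haveI : Nonempty (f ⁻¹' {j}) := ⟨⟨i, hi⟩⟩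
    refine aux_block (fun i : f ⁻¹' {j} => ω i) (fun i => hω i)
      (hs.comp_injective Subtype.val_injective) (K j) (hK j) (fun i => x i) (fun i => ?_)
      (hx.comp_injective Subtype.val_injective)
    have : f i = j := i.2
    have h0 := hxK (i : ι)
    rw [this] at h0
    exact h0
  choose z h1 h2 h3 using hb
  refine ⟨z, h1, h2, ?_⟩
  have hy := (aux_hasSum_inner ω x y (aux_summable_smul ω hω hs _ hx)).summable
  rw [← (hy.hasSum.tsum_fiberwise f).tsum_eq]
  exact tsum_congr fun j => (h3 j y).symm

theorem aux_bdd {H : Type*} [NormedAddCommGroup H] {T : Type*} (w : T → ℝ) (x : T → H)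
    (hw : ∀ i, 0 < w i) (hsw : Summable w) (hx : ∀ i, ‖x i‖ ≤ 1) :
    Summable fun i => w i * ‖x i‖ ^ 2 := by
  refine Summable.of_nonneg_of_le (fun i => mul_nonneg (hw i).le (sq_nonneg _)) (fun i => ?_) hsw
  exact mul_le_of_le_one_right (hw i).le (pow_le_one₀ (norm_nonneg _) (hx i))

/-- Reduction to unique subspaces: if the family `(Mᵢ)` consists of the
subspaces `L_j` repeated along a partition `(I_j)_{j∈J}` of `ι`, and
`λ_j = ∑_{i ∈ I_j} ω i`, then the Friedrichs cosine and the configuration constant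
computed from `(L_j)` with weights `λ` coincide with `c_ω` and `κ_ω`. -/
theorem stmt_8 {H : Type*} [NormedAddCommGroup H] [InnerProductSpace ℝ H] [CompleteSpace H]
    {ι : Type*} [Countable ι] [Nonempty ι]
    (ω : ι → ℝ) (hω : ∀ i, 0 < ω i) (hωsum : HasSum ω 1)
    (M : ι → Submodule ℝ H) [∀ i, CompleteSpace (M i)]
    (hMnt : ∀ i, M i ≠ ⊥)
    {J : Type*} [Countable J] [Nonempty J]
    (I : J → Set ι) (hIne : ∀ j, (I j).Nonempty)
    (hIdisj : ∀ j j', j ≠ j' → Disjoint (I j) (I j'))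
    (hIcover : (⋃ j, I j) = Set.univ)
    (L : J → Submodule ℝ H) [∀ j, CompleteSpace (L j)]
    (hLnt : ∀ j, L j ≠ ⊥)
    (hML : ∀ j, ∀ i ∈ I j, M i = L j)
    (lam : J → ℝ) (hlam : ∀ j, lam j = ∑' i : (I j), ω i) :
    friedrichsCos lam L = friedrichsCos ω M ∧
    configConst lam L = configConst ω M := by
  have hex : ∀ i, ∃ j, i ∈ I j := fun i => by
    have : i ∈ ⋃ j, I j := hIcover ▸ Set.mem_univ i
    simpa using this
  choose f hf using hex
  have hI : ∀ j, I j = f ⁻¹' {j} := by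
    intro j
    ext i
    constructor
    · intro hi
      by_contra hne
      exact Set.disjoint_left.1 (hIdisj (f i) j hne) (hf i) hi
    · rintro rfl
      exact hf i
  have hfs : Function.Surjective f := by
    intro j
    obtain ⟨i, hi⟩ := hIne j
    rw [hI] at hi
    exact ⟨i, hi⟩
  have hMf : ∀ i, M i = L (f i) := fun i => hML _ i (hf i)
  have hinf : (⨅ i, M i) = ⨅ j, L j := by
    simp_rw [hMf]
    exact hfs.iInf_comp L
  have hlam' : ∀ j, lam j = ∑' i : f ⁻¹' {j}, ω i := fun j => by rw [hlam, hI]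
  have hs := hωsum.summable
  have hlpos : ∀ j, 0 < lam j := by
    intro j
    obtain ⟨i, hi⟩ := hfs j
    rw [hlam']
    exact (hs.comp_injective Subtype.val_injective).tsum_pos (fun i => (hω i).le)
      (⟨i, hi⟩ : f ⁻¹' {j}) (hω i)
  have hlsum : Summable lam := by
    have := (hωsum.tsum_fiberwise f).summable
    exact this.congr fun j => (hlam' j).symm
  have hKc : ∀ j, IsClosed ((L j ⊓ (⨅ j, L j)ᗮ : Submodule ℝ H) : Set H) := fun j =>
    (completeSpace_coe_iff_isComplete.1 (inferInstance : CompleteSpace (L j))).isClosed.inter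
      (Submodule.isClosed_orthogonal _)
  obtain rfl : lam = fun j => ∑' i : f ⁻¹' {j}, ω i := funext hlam'
  constructor
  · unfold friedrichsCos
    congr 1
    ext r
    simp only [Set.mem_setOf_eq]
    rw [hinf]
    constructor
    · rintro ⟨x, y, hx, hxs, hx1, hy, hy1, rfl⟩
      obtain ⟨h1, h2, h3⟩ := aux_up f ω hω hs x y hxs
      exact ⟨fun i => x (f i), y, fun i => by rw [hMf]; exact hx _, h1, h2 ▸ hx1, hy, hy1, h3⟩
    · rintro ⟨x, y, hx, hxs, hx1, hy, hy1, rfl⟩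
      obtain ⟨z, h1, h2, h3⟩ := aux_down f hfs ω hω hs _ hKc x y
        (fun i => by rw [← hMf]; exact hx i) hxs
      have hfw := hxs.hasSum.tsum_fiberwise f
      have hzs := Summable.of_nonneg_of_le
        (fun j => mul_nonneg (hlpos j).le (sq_nonneg ‖z j‖)) h2 hfw.summable
      exact ⟨z, y, h1, hzs, (hasSum_le h2 hzs.hasSum hfw).trans hx1, hy, hy1, h3⟩
  · unfold configConst
    congr 1
    ext r
    simp only [Set.mem_setOf_eq]
    rw [hinf]
    constructor
    · rintro ⟨x, y, hx, hx1, hy, hy1, rfl⟩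
      obtain ⟨h1, h2, h3⟩ := aux_up f ω hω hs x y (aux_bdd _ x hlpos hlsum hx1)
      exact ⟨fun i => x (f i), y, fun i => by rw [hMf]; exact hx _, fun i => hx1 _, hy, hy1, h3⟩
    · rintro ⟨x, y, hx, hx1, hy, hy1, rfl⟩
      have hxs := aux_bdd ω x hω hs hx1
      obtain ⟨z, h1, h2, h3⟩ := aux_down f hfs ω hω hs _ hKc x y
        (fun i => by rw [← hMf]; exact hx i) hxs
      refine ⟨z, y, h1, fun j => ?_, hy, hy1, h3⟩
      have h4 : (∑' i : f ⁻¹' {j}, ω i * ‖x i‖ ^ 2) ≤ ∑' i : f ⁻¹' {j}, ω i := by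
        refine Summable.tsum_le_tsum (fun i => ?_) (hxs.comp_injective Subtype.val_injective)
          (hs.comp_injective Subtype.val_injective)
        exact mul_le_of_le_one_right (hω i).le (pow_le_one₀ (norm_nonneg _) (hx1 i))
      have h5 := (h2 j).trans h4
      have h6 : ‖z j‖ ^ 2 ≤ 1 := by
        by_contra hc
        push Not at hc
        have := hlpos j
        simp only at this
        nlinarith
      exact (sq_le_one_iff₀ (norm_nonneg _)).1 h6
end

section
/- Let the index set be ι = {1, 2, 3, …}. For each integer q ≥ 2 set s_q := ∑_{i=1}^q ω i, N_q := ⋂_{i=1}^q Mᵢ, and let c_q := sSup { ∑_{i=1}^q (ω i / s_q) ⟪xᵢ, y⟫ : xᵢ ∈ Mᵢ ∩ N_q^⊥ for i = 1,…,q, ∑_{i=1}^q (ω i / s_q) ‖xᵢ‖² ≤ 1, y ∈ N_q^⊥, ‖y‖ ≤ 1 } and κ_q := sSup { ∑_{i=1}^q (ω i / s_q) ⟪xᵢ, y⟫ : xᵢ ∈ Mᵢ ∩ N_q^⊥ and ‖xᵢ‖ ≤ 1 for i = 1,…,q, y ∈ N_q^⊥, ‖y‖ ≤ 1 }. Then c_q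 → c_ω and κ_q → κ_ω as q → ∞; moreover the sequences (s_q · c_q) and (s_q · κ_q) are nondecreasing. -/
open RealInnerProductSpace

theorem aux_proj {H : Type*} [NormedAddCommGroup H] [InnerProductSpace ℝ H] [CompleteSpace H]
    (M : ℕ → Submodule ℝ H) [∀ i, CompleteSpace (M i)]
    (N : ℕ → Submodule ℝ H) (hN : ∀ q, N q = ⨅ i ∈ Finset.range q, M i)
    (y : H) (hy : y ∈ (⨅ j, M j)ᗮ) :
    Filter.Tendsto (fun q => ((N q)ᗮ).starProjection y) Filter.atTop (nhds y) := by
  have hcl : ∀ i, IsClosed ((M i : Submodule ℝ H) : Set H) := fun i =>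
    (completeSpace_coe_iff_isComplete.mp (inferInstanceAs (CompleteSpace (M i)))).isClosed
  have hNcl : ∀ q, IsClosed ((N q : Submodule ℝ H) : Set H) := by
    intro q
    rw [hN]
    simp only [Submodule.coe_iInf]
    exact isClosed_iInter fun i => isClosed_iInter fun _ => hcl i
  have hmono : Monotone (fun q => (N q)ᗮ) := by
    intro a b hab
    apply Submodule.orthogonal_le
    rw [hN, hN]
    exact biInf_mono fun i hi => Finset.range_subset_range.2 hab hi
  have h1 := Submodule.starProjection_tendsto_closure_iSup (fun q => (N q)ᗮ) hmono y
  have hinf : (⨅ q, N q) = ⨅ j, M j := by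
    apply le_antisymm
    · refine le_iInf fun j => (iInf_le _ (j+1)).trans ?_
      rw [hN]
      exact biInf_le _ (by simp)
    · refine le_iInf fun q => ?_
      rw [hN]
      exact le_iInf₂ fun i _ => iInf_le _ i
  have hmem : y ∈ (⨆ q, (N q)ᗮ).topologicalClosure := by
    rw [← Submodule.orthogonal_orthogonal_eq_closure, ← Submodule.iInf_orthogonal]
    have : ∀ q, (N q)ᗮᗮ = N q := fun q => by
      rw [Submodule.orthogonal_orthogonal_eq_closure]
      exact (hNcl q).submodule_topologicalClosure_eq
    simp only [this, hinf]
    exact hy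
  rwa [Submodule.starProjection_eq_self_iff.2 hmem] at h1

theorem aux_term {H : Type*} [NormedAddCommGroup H] [InnerProductSpace ℝ H]
    (w : ℝ) (hw : 0 ≤ w) (x y : H) :
    |w * ⟪x, y⟫| ≤ (w * ‖x‖ ^ 2 + w) / 2 * ‖y‖ := by
  rw [abs_mul, abs_of_nonneg hw]
  have h := abs_real_inner_le_norm x y
  have h2 : ‖x‖ ≤ (‖x‖ ^ 2 + 1) / 2 := by nlinarith [sq_nonneg (‖x‖ - 1)]
  have h3 : ‖x‖ * ‖y‖ ≤ (‖x‖ ^ 2 + 1) / 2 * ‖y‖ := by gcongr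
  calc w * |⟪x, y⟫| ≤ w * ((‖x‖ ^ 2 + 1) / 2 * ‖y‖) := by
        gcongr; exact h.trans h3
    _ = _ := by ring

theorem aux_fin {H : Type*} [NormedAddCommGroup H] [InnerProductSpace ℝ H]
    (q : ℕ) (w : ℕ → ℝ) (hw : ∀ i, 0 ≤ w i) (x : ℕ → H) (y : H)
    (h1 : ∑ i ∈ Finset.range q, w i ≤ 1)
    (h2 : ∑ i ∈ Finset.range q, w i * ‖x i‖ ^ 2 ≤ 1) :
    |∑ i ∈ Finset.range q, w i * ⟪x i, y⟫| ≤ ‖y‖ := by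
  refine (Finset.abs_sum_le_sum_abs _ _).trans ?_
  refine (Finset.sum_le_sum fun i _ => aux_term (w i) (hw i) (x i) y).trans ?_
  rw [← Finset.sum_mul, ← Finset.sum_div, Finset.sum_add_distrib]
  have := norm_nonneg y
  nlinarith

theorem aux_summable_s9 {H : Type*} [NormedAddCommGroup H] [InnerProductSpace ℝ H]
    (ω : ℕ → ℝ) (hω : ∀ i, 0 < ω i) (hs : Summable ω) (x : ℕ → H) (y : H)
    (h2 : Summable fun i => ω i * ‖x i‖ ^ 2) :
    Summable fun i => ω i * ⟪x i, y⟫ := by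
  refine Summable.of_norm_bounded (g := fun i => (ω i * ‖x i‖ ^ 2 + ω i) / 2 * ‖y‖)
    (((h2.add hs).div_const 2).mul_right _) fun i => ?_
  rw [Real.norm_eq_abs]
  exact aux_term _ (hω i).le _ _

theorem aux_tendsto {a : ℕ → ℝ} {S : Set ℝ} (hne : S.Nonempty) (_hb : BddAbove S)
    (hle : ∀ q, 2 ≤ q → a q ≤ sSup S)
    (h : ∀ r ∈ S, ∃ f : ℕ → ℝ, Filter.Tendsto f Filter.atTop (nhds r) ∧ ∀ q, 2 ≤ q → f q ≤ a q) :
    Filter.Tendsto a Filter.atTop (nhds (sSup S)) := by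
  rw [tendsto_order]
  constructor
  · intro b hb
    obtain ⟨r, hr, hbr⟩ := exists_lt_of_lt_csSup hne hb
    obtain ⟨f, hf, hfa⟩ := h r hr
    filter_upwards [hf.eventually (lt_mem_nhds hbr), Filter.eventually_ge_atTop 2] with q h1 h2
    exact h1.trans_le (hfa q h2)
  · intro b hb
    filter_upwards [Filter.eventually_ge_atTop 2] with q h2
    exact (hle q h2).trans_lt hb

theorem aux_main {H : Type*} [NormedAddCommGroup H] [InnerProductSpace ℝ H] [CompleteSpace H]
    (ω : ℕ → ℝ) (hω : ∀ i, 0 < ω i) (hωsum : HasSum ω 1)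
    (M : ℕ → Submodule ℝ H) [∀ i, CompleteSpace (M i)]
    (s : ℕ → ℝ) (hs : ∀ q, s q = ∑ i ∈ Finset.range q, ω i)
    (N : ℕ → Submodule ℝ H) (hN : ∀ q, N q = ⨅ i ∈ Finset.range q, M i)
    (P : ℕ → (ℕ → H) → Prop) (Q : (ℕ → H) → Prop)
    (hP0 : ∀ q, P q 0) (hQ0 : Q 0)
    (hPn : ∀ q x, 2 ≤ q → P q x → ∑ i ∈ Finset.range q, ω i / s q * ‖x i‖ ^ 2 ≤ 1)
    (hQn : ∀ x, Q x → Summable (fun i => ω i * ‖x i‖ ^ 2) ∧ ∑' i, ω i * ‖x i‖ ^ 2 ≤ 1)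
    (hPP : ∀ q x, 2 ≤ q → P q x → P (q + 1) (fun i => if i < q then x i else 0))
    (hPQ : ∀ q x, 2 ≤ q → P q x → Q (fun i => if i < q then x i else 0))
    (hQP : ∀ q x (z : ℕ → H), 2 ≤ q → Q x → (∀ i, ‖z i‖ ≤ ‖x i‖) → P q (fun i => √(s q) • z i))
    (c : ℕ → ℝ)
    (hc : ∀ q, 2 ≤ q → c q = sSup { r : ℝ | ∃ (x : ℕ → H) (y : H),
      (∀ i < q, x i ∈ M i ⊓ (N q)ᗮ) ∧ P q x ∧
      y ∈ (N q)ᗮ ∧ ‖y‖ ≤ 1 ∧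
      r = ∑ i ∈ Finset.range q, ω i / s q * ⟪x i, y⟫ })
    (d : ℝ) (hd : d = sSup { r : ℝ | ∃ (x : ℕ → H) (y : H),
      (∀ i, x i ∈ M i ⊓ (⨅ j, M j)ᗮ) ∧ Q x ∧
      y ∈ (⨅ j, M j)ᗮ ∧ ‖y‖ ≤ 1 ∧
      r = ∑' i, ω i * ⟪x i, y⟫ }) :
    Filter.Tendsto c Filter.atTop (nhds d) ∧
    (∀ q, 2 ≤ q → s q * c q ≤ s (q + 1) * c (q + 1)) := by
  have hspos : ∀ q, 2 ≤ q → 0 < s q := fun q hq => by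
    rw [hs]
    exact Finset.sum_pos (fun i _ => hω i) ⟨0, by simp; omega⟩
  have hs1 : ∀ q, s q ≤ 1 := fun q => by
    rw [hs]
    exact sum_le_hasSum _ (fun i _ => (hω i).le) hωsum
  have hst : Filter.Tendsto s Filter.atTop (nhds 1) := by
    have := hωsum.tendsto_sum_nat
    rwa [← funext hs] at this
  have hw1 : ∀ q, 2 ≤ q → ∑ i ∈ Finset.range q, ω i / s q ≤ 1 := fun q hq => by
    rw [← Finset.sum_div, ← hs, div_self (hspos q hq).ne']
  have hscale : ∀ q (x : ℕ → H) (y : H), 2 ≤ q →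
      s q * ∑ i ∈ Finset.range q, ω i / s q * ⟪x i, y⟫ = ∑ i ∈ Finset.range q, ω i * ⟪x i, y⟫ := by
    intro q x y hq
    rw [Finset.mul_sum]
    refine Finset.sum_congr rfl fun i _ => ?_
    have := (hspos q hq).ne'
    field_simp
  -- boundedness
  have hbddq : ∀ q, 2 ≤ q → BddAbove { r : ℝ | ∃ (x : ℕ → H) (y : H),
      (∀ i < q, x i ∈ M i ⊓ (N q)ᗮ) ∧ P q x ∧
      y ∈ (N q)ᗮ ∧ ‖y‖ ≤ 1 ∧
      r = ∑ i ∈ Finset.range q, ω i / s q * ⟪x i, y⟫ } := by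
    intro q hq
    refine ⟨1, ?_⟩
    rintro r ⟨x, y, -, hP, -, hy, rfl⟩
    exact (le_abs_self _).trans ((aux_fin q _ (fun i => (div_pos (hω i) (hspos q hq)).le) x y
      (hw1 q hq) (hPn q x hq hP)).trans hy)
  have hbdd : BddAbove { r : ℝ | ∃ (x : ℕ → H) (y : H),
      (∀ i, x i ∈ M i ⊓ (⨅ j, M j)ᗮ) ∧ Q x ∧
      y ∈ (⨅ j, M j)ᗮ ∧ ‖y‖ ≤ 1 ∧
      r = ∑' i, ω i * ⟪x i, y⟫ } := by
    refine ⟨1, ?_⟩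
    rintro r ⟨x, y, -, hQ, -, hy, rfl⟩
    obtain ⟨h1, h2⟩ := hQn x hQ
    refine le_of_tendsto (aux_summable_s9 ω hω hωsum.summable x y h1).hasSum.tendsto_sum_nat
      (Filter.Eventually.of_forall fun q => ?_)
    refine (le_abs_self _).trans ((aux_fin q _ (fun i => (hω i).le) x y
      (hs q ▸ hs1 q) ?_).trans hy)
    exact (h1.sum_le_tsum _ (fun i _ => by have := (hω i).le; positivity)).trans h2
  have hNM : ∀ q, (⨅ j, M j) ≤ N q := fun q => by
    rw [hN]
    exact le_iInf₂ fun i _ => iInf_le _ i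
  have hNN : ∀ q, N (q+1) ≤ N q := fun q => by
    rw [hN, hN]
    exact biInf_mono fun i hi => Finset.range_subset_range.2 (Nat.le_succ q) hi
  have hNi : ∀ q i, i < q → N q ≤ M i := fun q i hi => by
    rw [hN]
    exact biInf_le _ (by simpa using hi)
  have hneq : ∀ q, 2 ≤ q → Set.Nonempty { r : ℝ | ∃ (x : ℕ → H) (y : H),
      (∀ i < q, x i ∈ M i ⊓ (N q)ᗮ) ∧ P q x ∧
      y ∈ (N q)ᗮ ∧ ‖y‖ ≤ 1 ∧
      r = ∑ i ∈ Finset.range q, ω i / s q * ⟪x i, y⟫ } := fun q _ =>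
    ⟨_, 0, 0, fun i _ => Submodule.zero_mem _, hP0 q, Submodule.zero_mem _, by simp, rfl⟩
  have hupper : ∀ q B, 2 ≤ q → (∀ (x : ℕ → H) (y : H),
      (∀ i < q, x i ∈ M i ⊓ (N q)ᗮ) → P q x →
      y ∈ (N q)ᗮ → ‖y‖ ≤ 1 → ∑ i ∈ Finset.range q, ω i * ⟪x i, y⟫ ≤ B) → s q * c q ≤ B := by
    intro q B hq h
    rw [mul_comm, ← le_div_iff₀ (hspos q hq), hc q hq]
    refine csSup_le (hneq q hq) ?_
    rintro r ⟨x, y, hx, hP, hy, hy1, rfl⟩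
    rw [le_div_iff₀ (hspos q hq), mul_comm, hscale q x y hq]
    exact h x y hx hP hy hy1
  have hlower : ∀ q, 2 ≤ q → ∀ (x : ℕ → H) (y : H),
      (∀ i < q, x i ∈ M i ⊓ (N q)ᗮ) → P q x →
      y ∈ (N q)ᗮ → ‖y‖ ≤ 1 → ∑ i ∈ Finset.range q, ω i * ⟪x i, y⟫ ≤ s q * c q := by
    intro q hq x y hx hP hy hy1
    rw [← hscale q x y hq, hc q hq]
    exact mul_le_mul_of_nonneg_left (le_csSup (hbddq q hq) ⟨x, y, hx, hP, hy, hy1, rfl⟩)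
      (hspos q hq).le
  refine ⟨?_, ?_⟩
  · have key : Filter.Tendsto (fun q => s q * c q) Filter.atTop (nhds d) := by
      rw [hd]
      refine aux_tendsto ⟨_, 0, 0, fun i => Submodule.zero_mem _, hQ0, Submodule.zero_mem _,
        by simp, rfl⟩ hbdd ?_ ?_
      · intro q hq
        refine hupper q _ hq fun x y hx hP hy hy1 => ?_
        refine le_csSup hbdd ⟨fun i => if i < q then x i else 0, y, ?_, hPQ q x hq hP,
          Submodule.orthogonal_le (hNM q) hy, hy1, ?_⟩
        · intro i
          dsimp only
          split_ifs with hi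
          · exact ⟨(hx i hi).1, Submodule.orthogonal_le (hNM q) (hx i hi).2⟩
          · exact Submodule.zero_mem _
        · rw [tsum_eq_sum (s := Finset.range q)]
          · refine Finset.sum_congr rfl fun i hi => ?_
            simp only [if_pos (Finset.mem_range.1 hi)]
          · intro i hi
            have hi2 : ¬ i < q := by simpa using hi
            simp [hi2]
      · rintro r ⟨x, y, hx, hQ, hy, hy1, rfl⟩
        obtain ⟨hQ1, hQ2⟩ := hQn x hQ
        refine ⟨fun q => √(s q) * ∑ i ∈ Finset.range q, ω i * ⟪x i, ((N q)ᗮ).starProjection y⟫,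
          ?_, ?_⟩
        · have hp := aux_proj M N hN y hy
          have h1 : Filter.Tendsto (fun q => ∑ i ∈ Finset.range q,
              ω i * ⟪x i, ((N q)ᗮ).starProjection y - y⟫) Filter.atTop (nhds 0) := by
            refine squeeze_zero_norm (a := fun q => ‖((N q)ᗮ).starProjection y - y‖) ?_ ?_
            · intro q
              rw [Real.norm_eq_abs]
              refine aux_fin q _ (fun i => (hω i).le) x _ (hs q ▸ hs1 q) ?_
              exact (hQ1.sum_le_tsum _ (fun i _ => by have := (hω i).le; positivity)).trans hQ2
            · exact tendsto_iff_norm_sub_tendsto_zero.1 hp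
          have h2 := (aux_summable_s9 ω hω hωsum.summable x y hQ1).hasSum.tendsto_sum_nat
          have h3 := ((Real.continuous_sqrt.tendsto 1).comp hst).mul (h1.add h2)
          simp only [Real.sqrt_one, one_mul, zero_add] at h3
          refine h3.congr fun q => ?_
          simp only [Function.comp]
          rw [← Finset.sum_add_distrib]
          congr 1
          refine Finset.sum_congr rfl fun i _ => ?_
          rw [inner_sub_right]; ring
        · intro q hq
          have hNcl : IsClosed ((N q : Submodule ℝ H) : Set H) := by
            rw [hN]
            simp only [Submodule.coe_iInf]
            exact isClosed_iInter fun i => isClosed_iInter fun _ =>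
              (completeSpace_coe_iff_isComplete.mp
                (inferInstanceAs (CompleteSpace (M i)))).isClosed
          have : CompleteSpace (N q) := hNcl.completeSpace_coe
          have := hlower q hq (fun i => √(s q) • ((N q)ᗮ).starProjection (x i))
            (((N q)ᗮ).starProjection y) ?_
            (hQP q x (fun i => ((N q)ᗮ).starProjection (x i)) hq hQ
              fun i => Submodule.norm_starProjection_apply_le _ _)
            (Submodule.starProjection_apply_mem _ _)
            ((Submodule.norm_starProjection_apply_le _ _).trans hy1)
          · refine le_trans (le_of_eq ?_) this
            dsimp only
            rw [Finset.mul_sum]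
            refine Finset.sum_congr rfl fun i _ => ?_
            rw [real_inner_smul_left, Submodule.inner_starProjection_left_eq_right,
              Submodule.starProjection_eq_self_iff.2 (Submodule.starProjection_apply_mem _ y)]
            ring
          · intro i hi
            refine Submodule.smul_mem _ _ ⟨?_, Submodule.starProjection_apply_mem _ _⟩
            rw [Submodule.starProjection_orthogonal_val]
            exact Submodule.sub_mem _ (hx i).1 (hNi q i hi (Submodule.starProjection_apply_mem _ _))
    have h4 := key.div hst one_ne_zero
    rw [div_one] at h4
    refine h4.congr' ?_
    filter_upwards [Filter.eventually_ge_atTop 2] with q hq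
    have := (hspos q hq).ne'
    simp only [Pi.div_apply]
    field_simp
  · intro q hq
    refine hupper q _ hq fun x y hx hP hy hy1 => ?_
    have := hlower (q+1) (by omega) (fun i => if i < q then x i else 0) y ?_ (hPP q x hq hP)
      (Submodule.orthogonal_le (hNN q) hy) hy1
    · refine le_trans (le_of_eq ?_) this
      rw [Finset.sum_range_succ, if_neg (lt_irrefl q), inner_zero_left, mul_zero, add_zero]
      refine Finset.sum_congr rfl fun i hi => ?_
      rw [if_pos (Finset.mem_range.1 hi)]
    · intro i _
      try dsimp only
      split_ifs with hi
      · exact ⟨(hx i hi).1, Submodule.orthogonal_le (hNN q) (hx i hi).2⟩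
      · exact Submodule.zero_mem _

/-- Approximation, countably infinite case: the truncated Friedrichs
cosines `c_q` (with renormalized weights `ω i / s_q`, subspaces `M_0, …, M_{q-1}` and
intersection `N_q`) converge to `c_ω`, the truncated configuration constants `κ_q`
converge to `κ_ω`, and the sequences `s_q · c_q` and `s_q · κ_q` are nondecreasing. -/
theorem stmt_9 {H : Type*} [NormedAddCommGroup H] [InnerProductSpace ℝ H] [CompleteSpace H]
    (ω : ℕ → ℝ) (hω : ∀ i, 0 < ω i) (hωsum : HasSum ω 1)
    (M : ℕ → Submodule ℝ H) [∀ i, CompleteSpace (M i)]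
    (hMnt : ∀ i, M i ≠ ⊥)
    (s : ℕ → ℝ) (hs : ∀ q, s q = ∑ i ∈ Finset.range q, ω i)
    (N : ℕ → Submodule ℝ H) (hN : ∀ q, N q = ⨅ i ∈ Finset.range q, M i)
    (c : ℕ → ℝ)
    (hc : ∀ q, 2 ≤ q → c q = sSup { r : ℝ | ∃ (x : ℕ → H) (y : H),
      (∀ i < q, x i ∈ M i ⊓ (N q)ᗮ) ∧
      (∑ i ∈ Finset.range q, ω i / s q * ‖x i‖ ^ 2) ≤ 1 ∧
      y ∈ (N q)ᗮ ∧ ‖y‖ ≤ 1 ∧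
      r = ∑ i ∈ Finset.range q, ω i / s q * ⟪x i, y⟫ })
    (kap : ℕ → ℝ)
    (hkap : ∀ q, 2 ≤ q → kap q = sSup { r : ℝ | ∃ (x : ℕ → H) (y : H),
      (∀ i < q, x i ∈ M i ⊓ (N q)ᗮ) ∧ (∀ i < q, ‖x i‖ ≤ 1) ∧
      y ∈ (N q)ᗮ ∧ ‖y‖ ≤ 1 ∧
      r = ∑ i ∈ Finset.range q, ω i / s q * ⟪x i, y⟫ }) :
    Filter.Tendsto c Filter.atTop (nhds (friedrichsCos ω M)) ∧
    Filter.Tendsto kap Filter.atTop (nhds (configConst ω M)) ∧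
    (∀ q, 2 ≤ q → s q * c q ≤ s (q + 1) * c (q + 1)) ∧
    (∀ q, 2 ≤ q → s q * kap q ≤ s (q + 1) * kap (q + 1)) := by
  have hspos : ∀ q, 2 ≤ q → 0 < s q := fun q hq => by
    rw [hs]
    exact Finset.sum_pos (fun i _ => hω i) ⟨0, by simp; omega⟩
  have hs1 : ∀ q, s q ≤ 1 := fun q => by
    rw [hs]
    exact sum_le_hasSum _ (fun i _ => (hω i).le) hωsum
  have hnn : ∀ (x : ℕ → H) i, 0 ≤ ω i * ‖x i‖ ^ 2 := fun x i => by
    have := (hω i).le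
    positivity
  have hdiv : ∀ q (x : ℕ → H), 2 ≤ q → ((∑ i ∈ Finset.range q, ω i / s q * ‖x i‖ ^ 2) ≤ 1 ↔
      ∑ i ∈ Finset.range q, ω i * ‖x i‖ ^ 2 ≤ s q) := by
    intro q x hq
    rw [← div_le_one (hspos q hq), Finset.sum_div]
    simp only [div_mul_eq_mul_div]
  have A := aux_main ω hω hωsum M s hs N hN
    (fun q x => (∑ i ∈ Finset.range q, ω i / s q * ‖x i‖ ^ 2) ≤ 1)
    (fun x => (Summable fun i => ω i * ‖x i‖ ^ 2) ∧ (∑' i, ω i * ‖x i‖ ^ 2) ≤ 1)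
    (by simp) (by simp [summable_zero]) (fun q x _ h => h) (fun x h => h) ?_ ?_ ?_ c hc
    (friedrichsCos ω M) (by unfold friedrichsCos; simp only [and_assoc])
  have B := aux_main ω hω hωsum M s hs N hN
    (fun q x => ∀ i < q, ‖x i‖ ≤ 1)
    (fun x => ∀ i, ‖x i‖ ≤ 1)
    (by simp) (by simp) ?_ ?_ ?_ ?_ ?_ kap hkap
    (configConst ω M) rfl
  · exact ⟨A.1, B.1, A.2, B.2⟩
  · intro q x hq h
    rw [hdiv q x hq, hs]
    refine Finset.sum_le_sum fun i hi => ?_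
    exact mul_le_of_le_one_right (hω i).le
      (pow_le_one₀ (norm_nonneg _) (h i (Finset.mem_range.1 hi)))
  · intro x h
    have hle : ∀ i, ω i * ‖x i‖ ^ 2 ≤ ω i := fun i =>
      mul_le_of_le_one_right (hω i).le (pow_le_one₀ (norm_nonneg _) (h i))
    have hsm := Summable.of_nonneg_of_le (hnn x) hle hωsum.summable
    exact ⟨hsm, (hsm.tsum_le_tsum hle hωsum.summable).trans hωsum.tsum_eq.le⟩
  · intro q x _ h i _
    try dsimp only
    split_ifs with hi
    · exact h i hi
    · simp
  · intro q x _ h i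
    try dsimp only
    split_ifs with hi
    · exact h i hi
    · simp
  · intro q x z _ h hz i _
    rw [norm_smul, Real.norm_of_nonneg (Real.sqrt_nonneg _)]
    exact mul_le_one₀ (Real.sqrt_le_one.2 (hs1 q)) (norm_nonneg _) ((hz i).trans (h i))
  · intro q x hq h
    try dsimp only at h ⊢
    rw [hdiv q x hq] at h
    rw [hdiv _ _ (by omega), Finset.sum_range_succ, if_neg (lt_irrefl q), norm_zero]
    have e : ∑ i ∈ Finset.range q, ω i * ‖if i < q then x i else 0‖ ^ 2
        = ∑ i ∈ Finset.range q, ω i * ‖x i‖ ^ 2 :=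
      Finset.sum_congr rfl fun i hi => by rw [if_pos (Finset.mem_range.1 hi)]
    have e2 : s (q+1) = s q + ω q := by rw [hs, hs, Finset.sum_range_succ]
    have := (hω q).le
    rw [e, e2]
    norm_num
    linarith
  · intro q x hq h
    try dsimp only at h ⊢
    rw [hdiv q x hq] at h
    have e := hasSum_sum_of_ne_finset_zero (L := SummationFilter.unconditional ℕ)
      (s := Finset.range q)
      (f := fun i => ω i * ‖if i < q then x i else 0‖ ^ 2)
      (fun i hi => by rw [if_neg (by simpa using hi)]; simp)
    refine ⟨e.summable, ?_⟩
    rw [e.tsum_eq]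
    refine le_trans (le_of_eq ?_) (h.trans (hs1 q))
    exact Finset.sum_congr rfl fun i hi => by rw [if_pos (Finset.mem_range.1 hi)]
  · intro q x z hq h hz
    try dsimp only at h ⊢
    rw [hdiv q _ hq]
    have hsn := (hspos q hq).le
    have : ∀ i, ω i * ‖√(s q) • z i‖ ^ 2 = s q * (ω i * ‖z i‖ ^ 2) := fun i => by
      rw [norm_smul, Real.norm_of_nonneg (Real.sqrt_nonneg _), mul_pow, Real.sq_sqrt hsn]
      ring
    simp only [this]
    rw [← Finset.mul_sum]
    refine mul_le_of_le_one_right hsn ?_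
    refine (Finset.sum_le_sum (g := fun i => ω i * ‖x i‖ ^ 2) fun i _ => ?_).trans
      ((h.1.sum_le_tsum _ (fun i _ => hnn x i)).trans h.2)
    have := (hω i).le
    have := hz i
    try dsimp only
    gcongr
end

section
/- Assume ι has at least two elements and the subspaces Mᵢ are pairwise orthogonal, i.e. ⟪u, v⟫ = 0 whenever u ∈ Mᵢ, v ∈ Mⱼ and i ≠ j. Then the configuration constant satisfies κ_ω = √(∑ᵢ (ω i)²) and the Friedrichs cosine satisfies c_ω = √(sSup { ω i : i ∈ ι }). -/
open RealInnerProductSpace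

theorem aux_upper {H : Type*} [NormedAddCommGroup H] [InnerProductSpace ℝ H]
    {ι : Type*} (ω : ι → ℝ) (M : ι → Submodule ℝ H)
    (horth : ∀ i j, i ≠ j → ∀ u ∈ M i, ∀ v ∈ M j, ⟪u, v⟫ = 0)
    (x : ι → H) (y : H) (hx : ∀ i, x i ∈ M i) (hy : ‖y‖ ≤ 1) (C : ℝ) (hC : 0 ≤ C)
    (hb : ∀ s : Finset ι, ∑ i ∈ s, ω i ^ 2 * ‖x i‖ ^ 2 ≤ C ^ 2) :
    ∑' i, ω i * ⟪x i, y⟫ ≤ C := by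
  classical
  refine tsum_le_of_sum_le' hC fun s => ?_
  have h1 : ∑ i ∈ s, ω i * ⟪x i, y⟫ = ⟪∑ i ∈ s, ω i • x i, y⟫ := by
    rw [sum_inner]
    exact Finset.sum_congr rfl fun i _ => by rw [real_inner_smul_left]
  have h2 : ‖∑ i ∈ s, ω i • x i‖ ^ 2 = ∑ i ∈ s, ω i ^ 2 * ‖x i‖ ^ 2 := by
    rw [← real_inner_self_eq_norm_sq, sum_inner]
    refine Finset.sum_congr rfl fun i hi => ?_
    rw [inner_sum, Finset.sum_eq_single i]
    · rw [real_inner_smul_left, real_inner_smul_right, real_inner_self_eq_norm_sq]; ring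
    · intro j _ hj
      rw [real_inner_smul_left, real_inner_smul_right, horth i j hj.symm _ (hx i) _ (hx j)]
      ring
    · intro h; exact absurd hi h
  have h3 : ‖∑ i ∈ s, ω i • x i‖ ≤ C :=
    abs_le_of_sq_le_sq' (h2 ▸ hb s) hC |>.2
  rw [h1]
  calc _ ≤ ‖∑ i ∈ s, ω i • x i‖ * ‖y‖ := real_inner_le_norm _ _
    _ ≤ C * 1 := mul_le_mul h3 hy (norm_nonneg _) hC
    _ = C := mul_one C

/-- If the subspaces `Mᵢ` are pairwise orthogonal (and there are at
least two of them), then `κ_ω = √(∑ᵢ ωᵢ²)` and `c_ω = √(sup_i ωᵢ)`. -/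
theorem stmt_10 {H : Type*} [NormedAddCommGroup H] [InnerProductSpace ℝ H] [CompleteSpace H]
    {ι : Type*} [Countable ι] [Nontrivial ι]
    (ω : ι → ℝ) (hω : ∀ i, 0 < ω i) (hωsum : HasSum ω 1)
    (M : ι → Submodule ℝ H) [∀ i, CompleteSpace (M i)]
    (hMnt : ∀ i, M i ≠ ⊥)
    (horth : ∀ i j, i ≠ j → ∀ u ∈ M i, ∀ v ∈ M j, ⟪u, v⟫ = 0) :
    configConst ω M = Real.sqrt (∑' i, ω i ^ 2) ∧
    friedrichsCos ω M = Real.sqrt (sSup (Set.range ω)) := by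
  classical
  have hbot : (⨅ j, M j) = ⊥ := by
    rw [eq_bot_iff]
    intro v hv
    rw [Submodule.mem_iInf] at hv
    obtain ⟨i, j, hij⟩ := exists_pair_ne ι
    exact (Submodule.mem_bot ℝ).2 (inner_self_eq_zero.1 (horth i j hij v (hv i) v (hv j)))
  have hE : ∀ i, ∃ e ∈ M i, ‖e‖ = 1 := by
    intro i
    obtain ⟨v, hv, hv0⟩ := Submodule.exists_mem_ne_zero_of_ne_bot (hMnt i)
    exact ⟨‖v‖⁻¹ • v, (M i).smul_mem _ hv, norm_smul_inv_norm (𝕜 := ℝ) hv0⟩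
  choose e heM he1 using hE
  have hle1 : ∀ i, ω i ≤ 1 := fun i => le_hasSum hωsum i fun j _ => (hω j).le
  have hsq : Summable fun i => ω i ^ 2 := by
    refine Summable.of_nonneg_of_le (fun i => sq_nonneg _) (fun i => ?_) hωsum.summable
    nlinarith [hω i, hle1 i]
  have hbdd : BddAbove (Set.range ω) := ⟨1, by rintro _ ⟨i, rfl⟩; exact hle1 i⟩
  obtain ⟨i0⟩ : Nonempty ι := inferInstance
  have hSle : ∀ i, ω i ≤ sSup (Set.range ω) := fun i => le_csSup hbdd ⟨i, rfl⟩
  have hS0 : 0 ≤ sSup (Set.range ω) := (hω i0).le.trans (hSle i0)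
  have hQ0 : 0 < ∑' i, ω i ^ 2 :=
    hsq.tsum_pos (fun i => sq_nonneg _) i0 (pow_pos (hω i0) 2)
  constructor
  · unfold configConst
    simp only [hbot, Submodule.bot_orthogonal_eq_top, inf_top_eq, Submodule.mem_top, true_and]
    apply IsGreatest.csSup_eq
    constructor
    · set C := Real.sqrt (∑' i, ω i ^ 2) with hCdef
      have hC : 0 < C := Real.sqrt_pos.2 hQ0
      have hCC : C ^ 2 = ∑' i, ω i ^ 2 := Real.sq_sqrt hQ0.le
      have hz : Summable fun i => ω i • e i := by
        refine Summable.of_norm ?_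
        refine hωsum.summable.congr fun i => ?_
        rw [norm_smul, he1, mul_one, Real.norm_of_nonneg (hω i).le]
      set z := ∑' i, ω i • e i with hzdef
      have hin : ∀ i, ⟪e i, z⟫ = ω i := by
        intro i
        have h := (hz.hasSum.mapL (innerSL ℝ (e i))).tsum_eq
        simp only [innerSL_apply_apply] at h
        rw [← hzdef] at h
        rw [← h, tsum_eq_single i]
        · rw [real_inner_smul_right, real_inner_self_eq_norm_sq, he1]; ring
        · intro j hj
          rw [real_inner_smul_right, horth i j hj.symm _ (heM i) _ (heM j), mul_zero]
      have hzz : ‖z‖ ^ 2 = C ^ 2 := by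
        rw [hCC, ← real_inner_self_eq_norm_sq]
        have h := (hz.hasSum.mapL (innerSL ℝ z)).tsum_eq
        simp only [innerSL_apply_apply] at h
        rw [← hzdef] at h
        rw [← h]
        refine tsum_congr fun i => ?_
        rw [real_inner_smul_right, real_inner_comm, hin]; ring
      have hzn : ‖z‖ = C := by
        rwa [sq_eq_sq₀ (norm_nonneg _) hC.le] at hzz
      refine ⟨e, C⁻¹ • z, heM, fun i => (he1 i).le, ?_, ?_⟩
      · rw [norm_smul, hzn, Real.norm_of_nonneg (inv_nonneg.2 hC.le), inv_mul_cancel₀ hC.ne']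
      · have : ∀ i, ω i * ⟪e i, C⁻¹ • z⟫ = C⁻¹ * ω i ^ 2 := fun i => by
          rw [real_inner_smul_right, hin]; ring
        simp_rw [this]
        rw [tsum_mul_left, ← hCC]
        field_simp
    · rintro r ⟨x, y, hx, hx1, hy, rfl⟩
      refine aux_upper ω M horth x y hx hy _ (Real.sqrt_nonneg _) fun s => ?_
      rw [Real.sq_sqrt hQ0.le]
      refine le_trans (Finset.sum_le_sum fun i _ => ?_)
        (hsq.sum_le_tsum s fun i _ => sq_nonneg _)
      exact mul_le_of_le_one_right (sq_nonneg _) (pow_le_one₀ (norm_nonneg _) (hx1 i))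
  · unfold friedrichsCos
    simp only [hbot, Submodule.bot_orthogonal_eq_top, inf_top_eq, Submodule.mem_top, true_and]
    apply IsLUB.csSup_eq
    · constructor
      · rintro r ⟨x, y, hx, hxs, hx1, hy, rfl⟩
        refine aux_upper ω M horth x y hx hy _ (Real.sqrt_nonneg _) fun s => ?_
        rw [Real.sq_sqrt hS0]
        have hnn : ∀ i, 0 ≤ ω i * ‖x i‖ ^ 2 := fun i => mul_nonneg (hω i).le (sq_nonneg _)
        calc ∑ i ∈ s, ω i ^ 2 * ‖x i‖ ^ 2
            ≤ ∑ i ∈ s, sSup (Set.range ω) * (ω i * ‖x i‖ ^ 2) :=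
              Finset.sum_le_sum fun i _ => by
                have := mul_le_mul_of_nonneg_right (hSle i) (hnn i)
                linarith [this, (by ring : ω i ^ 2 * ‖x i‖ ^ 2 = ω i * (ω i * ‖x i‖ ^ 2))]
          _ = sSup (Set.range ω) * ∑ i ∈ s, (ω i * ‖x i‖ ^ 2) := by rw [Finset.mul_sum]
          _ ≤ sSup (Set.range ω) * 1 :=
              mul_le_mul_of_nonneg_left ((hxs.sum_le_tsum s fun i _ => hnn i).trans hx1) hS0
          _ = _ := mul_one _
      · intro b hb
        have key : ∀ i, Real.sqrt (ω i) ≤ b := by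
          intro i
          have hs : 0 < Real.sqrt (ω i) := Real.sqrt_pos.2 (hω i)
          have hss : Real.sqrt (ω i) ^ 2 = ω i := Real.sq_sqrt (hω i).le
          have hH : HasSum (fun j => ω j * ‖(Pi.single i ((Real.sqrt (ω i))⁻¹ • e i) : ι → H) j‖ ^ 2)
              1 := by
            convert hasSum_single i ?_ using 1
            · rw [Pi.single_eq_same, norm_smul, he1, Real.norm_of_nonneg (inv_nonneg.2 hs.le),
                mul_one, inv_pow, hss, mul_inv_cancel₀ (hω i).ne']
            · intro j hj
              rw [Pi.single_eq_of_ne hj]; simp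
          refine hb ⟨Pi.single i ((Real.sqrt (ω i))⁻¹ • e i), e i, ?_, hH.summable,
            hH.tsum_eq.le, (he1 i).le, ?_⟩
          · intro j
            by_cases hj : j = i
            · subst hj
              rw [Pi.single_eq_same]; exact (M j).smul_mem _ (heM j)
            · rw [Pi.single_eq_of_ne hj]; exact (M j).zero_mem
          · rw [tsum_eq_single i]
            · rw [Pi.single_eq_same, real_inner_smul_left, real_inner_self_eq_norm_sq, he1]
              field_simp
              linarith
            · intro j hj
              rw [Pi.single_eq_of_ne hj]; simp
        have hb0 : 0 ≤ b := (Real.sqrt_nonneg _).trans (key i0)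
        rw [Real.sqrt_le_left hb0]
        refine csSup_le (Set.range_nonempty ω) ?_
        rintro _ ⟨i, rfl⟩
        exact (Real.sqrt_le_left hb0).1 (key i)
    · exact ⟨_, 0, 0, fun i => (M i).zero_mem, by simpa using summable_zero, by simp, by simp, rfl⟩
end

section
/- Fix the subspaces (Mᵢ)_{i∈ι}. The following are equivalent: (i) there exists a weight family λ : ι → ℝ (λ i > 0 for all i, ∑ᵢ λ i = 1) such that the Friedrichs cosine c_λ equals 1; (ii) for every weight family ω : ι → ℝ (ω i > 0 for all i, ∑ᵢ ω i = 1), the Friedrichs cosine c_ω equals 1. -/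
open RealInnerProductSpace

lemma fc_le {H : Type*} [NormedAddCommGroup H] [InnerProductSpace ℝ H]
    {ι : Type*} {ω : ι → ℝ} (hpos : ∀ i, 0 < ω i) (hs : HasSum ω 1) (x : ι → H) (y : H)
    (hx : Summable fun i => ω i * ‖x i‖ ^ 2) :
    HasSum (fun i => ω i * ‖x i - y‖ ^ 2)
      ((∑' i, ω i * ‖x i‖ ^ 2) - 2 * (∑' i, ω i * ⟪x i, y⟫) + ‖y‖ ^ 2) := by
  have h1 : Summable fun i => ω i * ⟪x i, y⟫ := by
    refine Summable.of_norm_bounded (g := fun i => ω i * ‖x i‖ ^ 2 + ω i * ‖y‖ ^ 2)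
      (hx.add (hs.summable.mul_right _)) fun i => ?_
    rw [norm_mul, Real.norm_of_nonneg (hpos i).le, ← mul_add]
    refine mul_le_mul_of_nonneg_left ?_ (hpos i).le
    have := norm_inner_le_norm (𝕜 := ℝ) (x i) y
    nlinarith [sq_nonneg (‖x i‖ - ‖y‖), sq_nonneg ‖x i‖, sq_nonneg ‖y‖]
  have h2 := (hx.hasSum.sub (h1.hasSum.mul_left 2)).add (hs.mul_right (‖y‖ ^ 2))
  rw [one_mul] at h2
  refine h2.congr_fun ?_
  intro i
  rw [norm_sub_sq_real]; ring

def FcCond {H : Type*} [NormedAddCommGroup H] [InnerProductSpace ℝ H]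
    {ι : Type*} (M : ι → Submodule ℝ H) : Prop :=
  ∀ (F : Finset ι) (ε : ℝ), 0 < ε → ∃ y ∈ (⨅ j, M j)ᗮ, ‖y‖ ≤ 1 ∧ 1 - ε ≤ ‖y‖ ^ 2 ∧
    ∀ i ∈ F, ∃ x ∈ M i ⊓ (⨅ j, M j)ᗮ, ‖x - y‖ ^ 2 ≤ ε

lemma fc_cond {H : Type*} [NormedAddCommGroup H] [InnerProductSpace ℝ H]
    {ι : Type*} (M : ι → Submodule ℝ H)
    {ω : ι → ℝ} (hpos : ∀ i, 0 < ω i) (hs : HasSum ω 1) (h : friedrichsCos ω M = 1) :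
    FcCond M := by
  intro F ε hε
  obtain ⟨m, hm, hmF⟩ : ∃ m : ℝ, 0 < m ∧ ∀ i ∈ F, m ≤ ω i := by
    classical
    induction F using Finset.induction_on with
    | empty => exact ⟨1, one_pos, by simp⟩
    | insert a s _ ih =>
      obtain ⟨m, hm, hh⟩ := ih
      refine ⟨min m (ω a), lt_min hm (hpos a), fun i hi => ?_⟩
      rcases Finset.mem_insert.1 hi with rfl | hi
      · exact min_le_right _ _
      · exact (min_le_left _ _).trans (hh i hi)
  obtain ⟨δ, hδ, hδ1, hδ2⟩ : ∃ δ : ℝ, 0 < δ ∧ 2 * δ ≤ ε ∧ 2 * δ ≤ m * ε :=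
    ⟨min ε (m * ε) / 2, by positivity, by linarith [min_le_left ε (m * ε)],
      by linarith [min_le_right ε (m * ε)]⟩
  unfold friedrichsCos at h
  obtain ⟨r, ⟨x, y, hxM, hsum, hle, hyM, hy1, rfl⟩, hr⟩ := exists_lt_of_lt_csSup
    (by exact ⟨_, 0, 0, by simp [Submodule.zero_mem], by simp [summable_zero], by simp, by simp, by simp, rfl⟩)
    (h ▸ (by linarith : 1 - δ < 1))
  have key := fc_le hpos hs x y hsum
  have h0 : ∀ i, 0 ≤ ω i * ‖x i - y‖ ^ 2 := fun i => mul_nonneg (hpos i).le (sq_nonneg _)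
  have hnn := key.nonneg h0
  have hyy : ‖y‖ ^ 2 ≤ 1 := by nlinarith [norm_nonneg y]
  refine ⟨y, hyM, hy1, by linarith, fun i hi => ⟨x i, hxM i, ?_⟩⟩
  have h3 := le_hasSum key i (fun j _ => h0 j)
  have h4 := mul_le_mul_of_nonneg_right (hmF i hi) (sq_nonneg ‖x i - y‖)
  have : m * ‖x i - y‖ ^ 2 ≤ m * ε := by linarith
  exact le_of_mul_le_mul_left this hm

lemma cond_fc {H : Type*} [NormedAddCommGroup H] [InnerProductSpace ℝ H] [CompleteSpace H]
    {ι : Type*} (M : ι → Submodule ℝ H) [∀ i, CompleteSpace (M i)]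
    {ω : ι → ℝ} (hpos : ∀ i, 0 < ω i) (hs : HasSum ω 1) (h : FcCond M) :
    friedrichsCos ω M = 1 := by
  classical
  have hub : ∀ r ∈ { r : ℝ | ∃ (x : ι → H) (y : H),
    (∀ i, x i ∈ M i ⊓ (⨅ j, M j)ᗮ) ∧
    (Summable fun i => ω i * ‖x i‖ ^ 2) ∧ (∑' i, ω i * ‖x i‖ ^ 2) ≤ 1 ∧
    y ∈ (⨅ j, M j)ᗮ ∧ ‖y‖ ≤ 1 ∧
    r = ∑' i, ω i * ⟪x i, y⟫ }, r ≤ 1 := by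
    rintro r ⟨x, y, hxM, hsum, hle, hyM, hy1, rfl⟩
    have hnn := (fc_le hpos hs x y hsum).nonneg
      fun i => mul_nonneg (hpos i).le (sq_nonneg _)
    have hyy : ‖y‖ ^ 2 ≤ 1 := by nlinarith [norm_nonneg y]
    linarith
  refine le_antisymm (csSup_le ⟨_, 0, 0, by simp [Submodule.zero_mem], by simp [summable_zero], by simp, by simp, by simp, rfl⟩ hub) ?_
  refine le_of_forall_pos_le_add fun e he => ?_
  obtain ⟨ε, hε, hε3⟩ : ∃ ε : ℝ, 0 < ε ∧ 3 * ε ≤ e := ⟨e / 3, by positivity, by linarith⟩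
  obtain ⟨F, hF⟩ := (hs.eventually (lt_mem_nhds (by linarith : 1 - ε < 1))).exists
  have hF1 : ∑ i ∈ F, ω i ≤ 1 := sum_le_hasSum F (fun i _ => (hpos i).le) hs
  have hF0 : 0 ≤ ∑ i ∈ F, ω i := Finset.sum_nonneg fun i _ => (hpos i).le
  obtain ⟨y, hyM, hy1, hy2, hx⟩ := h F ε hε
  have hyy : ‖y‖ ^ 2 ≤ 1 := by nlinarith [norm_nonneg y]
  have hN : ∀ i, CompleteSpace ↥(M i ⊓ (⨅ j, M j)ᗮ) := fun i => by
    have h1 : IsClosed (M i : Set H) :=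
      (completeSpace_coe_iff_isComplete.1 (inferInstance : CompleteSpace (M i))).isClosed
    have h2 : IsClosed ((M i ⊓ (⨅ j, M j)ᗮ : Submodule ℝ H) : Set H) :=
      h1.inter (Submodule.isClosed_orthogonal _)
    exact h2.completeSpace_coe
  have hP : ∀ i, ∃ p ∈ M i ⊓ (⨅ j, M j)ᗮ, ∀ x ∈ M i ⊓ (⨅ j, M j)ᗮ, ⟪x, y⟫ = ⟪x, p⟫ := fun i => by
    refine ⟨(M i ⊓ (⨅ j, M j)ᗮ).starProjection y, Submodule.starProjection_apply_mem _ _,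
      fun x hx => ?_⟩
    have := Submodule.sub_starProjection_mem_orthogonal (K := M i ⊓ (⨅ j, M j)ᗮ) y x hx
    rw [inner_sub_right] at this
    linarith
  choose p hpN hp using hP
  have hpp : ∀ i, ⟪p i, y⟫ = ‖p i‖ ^ 2 := fun i => by
    rw [hp i _ (hpN i), real_inner_self_eq_norm_sq]
  have hple : ∀ i, ‖p i‖ ^ 2 ≤ 1 := fun i => by
    have := norm_sub_sq_real (p i) y
    rw [hpp] at this
    nlinarith [sq_nonneg ‖p i - y‖]
  have hpge : ∀ i ∈ F, 1 - 2 * ε ≤ ‖p i‖ ^ 2 := fun i hi => by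
    obtain ⟨x, hxN, hxy⟩ := hx i hi
    have h1 := norm_sub_sq_real x y
    have h2 := norm_sub_sq_real x (p i)
    rw [hp i x hxN] at h1
    nlinarith [sq_nonneg ‖x - p i‖]
  have e1 : ∀ i ∉ F, ω i * ‖(if i ∈ F then p i else 0)‖ ^ 2 = 0 := fun i hi => by simp [hi]
  have e2 : ∀ i ∉ F, ω i * ⟪(if i ∈ F then p i else 0), y⟫ = 0 := fun i hi => by simp [hi]
  have hmem : (∑ i ∈ F, ω i * ‖p i‖ ^ 2) ≤ friedrichsCos ω M := by
    refine le_csSup ⟨1, hub⟩ ⟨fun i => if i ∈ F then p i else 0, y, ?_, ?_, ?_, hyM, hy1, ?_⟩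
    · intro i
      dsimp only
      split_ifs
      · exact hpN i
      · exact Submodule.zero_mem _
    · exact summable_of_ne_finset_zero (s := F) e1
    · rw [tsum_eq_sum (s := F) e1]
      refine le_trans (Finset.sum_le_sum fun i hi => ?_) hF1
      rw [if_pos hi]
      exact mul_le_of_le_one_right (hpos i).le (hple i)
    · rw [tsum_eq_sum (s := F) e2]
      refine Finset.sum_congr rfl fun i hi => ?_
      rw [if_pos hi, hpp]
  have hlow : (∑ i ∈ F, ω i) * (1 - 2 * ε) ≤ ∑ i ∈ F, ω i * ‖p i‖ ^ 2 := by
    rw [Finset.sum_mul]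
    exact Finset.sum_le_sum fun i hi => mul_le_mul_of_nonneg_left (hpge i hi) (hpos i).le
  nlinarith

lemma exists_weight (ι : Type*) [Countable ι] [Nonempty ι] :
    ∃ w : ι → ℝ, (∀ i, 0 < w i) ∧ HasSum w 1 := by
  haveI := Encodable.ofCountable ι
  obtain ⟨w, hw, c, hc, -⟩ := posSumOfEncodable (ε := 1) one_pos ι
  have hc0 : 0 < c := by
    obtain ⟨i⟩ := ‹Nonempty ι›
    exact (hw i).trans_le (le_hasSum hc i fun j _ => (hw j).le)
  refine ⟨fun i => w i / c, fun i => div_pos (hw i) hc0, ?_⟩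
  simpa [div_self hc0.ne'] using hc.div_const c

/-- there exists a weight family `λ` with `c_λ = 1` if and only if
`c_ω = 1` for every weight family `ω`. -/
theorem stmt_11 {H : Type*} [NormedAddCommGroup H] [InnerProductSpace ℝ H] [CompleteSpace H]
    {ι : Type*} [Countable ι] [Nonempty ι]
    (M : ι → Submodule ℝ H) [∀ i, CompleteSpace (M i)]
    (hMnt : ∀ i, M i ≠ ⊥) :
    (∃ lam : ι → ℝ, (∀ i, 0 < lam i) ∧ HasSum lam 1 ∧ friedrichsCos lam M = 1) ↔
    (∀ ω : ι → ℝ, (∀ i, 0 < ω i) → HasSum ω 1 → friedrichsCos ω M = 1) := by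
  constructor
  · rintro ⟨lam, hpos, hs, h⟩ ω hω hωs
    exact cond_fc M hω hωs (fc_cond M hpos hs h)
  · intro h
    obtain ⟨w, hw, hws⟩ := exists_weight ι
    exact ⟨w, hw, hws, h w hw hws⟩
end

section
/- The closure in H of the set A_ω = { ∑ᵢ ω i • xᵢ : x : ι → H with xᵢ ∈ Mᵢ^⊥ for all i and ∑ᵢ ω i ‖xᵢ‖² < ∞ } equals M^⊥, the orthogonal complement of M = ⋂ᵢ Mᵢ. -/
open RealInnerProductSpace

/-- The closure of
`A_ω = { ∑ᵢ ω i • xᵢ : xᵢ ∈ Mᵢ^⊥, ∑ᵢ ω i ‖xᵢ‖² < ∞ }` equals `M^⊥`. -/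
theorem stmt_12 {H : Type*} [NormedAddCommGroup H] [InnerProductSpace ℝ H] [CompleteSpace H]
    {ι : Type*} [Countable ι] [Nonempty ι]
    (ω : ι → ℝ) (hω : ∀ i, 0 < ω i) (hωsum : HasSum ω 1)
    (M : ι → Submodule ℝ H) [∀ i, CompleteSpace (M i)]
    (hMnt : ∀ i, M i ≠ ⊥) :
    closure { y : H | ∃ x : ι → H, (∀ i, x i ∈ (M i)ᗮ) ∧
        (Summable fun i => ω i * ‖x i‖ ^ 2) ∧ y = ∑' i, ω i • x i } =
      (((⨅ i, M i : Submodule ℝ H)ᗮ : Submodule ℝ H) : Set H) := by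
  have hM : (⨅ i, M i : Submodule ℝ H) = (⨆ i, (M i)ᗮ)ᗮ := by
    rw [← Submodule.iInf_orthogonal]
    exact iInf_congr fun i => (Submodule.orthogonal_orthogonal (M i)).symm
  apply Set.Subset.antisymm
  · refine closure_minimal ?_ (Submodule.isClosed_orthogonal _)
    rintro y ⟨x, hx, -, rfl⟩
    rw [SetLike.mem_coe, Submodule.mem_orthogonal]
    intro u hu
    by_cases hs : Summable fun i => ω i • x i
    · have h := hs.hasSum.mapL (innerSL ℝ u)
      have h0 : ∀ i, innerSL ℝ u (ω i • x i) = 0 := by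
        intro i
        have := (Submodule.mem_orthogonal _ _).1 (hx i) u ((Submodule.mem_iInf _).1 hu i)
        simp [inner_smul_right, this]
      simp only [h0] at h
      exact (h.unique hasSum_zero)
    · rw [tsum_eq_zero_of_not_summable hs, inner_zero_right]
  · rw [hM, Submodule.orthogonal_orthogonal_eq_closure, Submodule.topologicalClosure_coe]
    apply closure_mono
    intro y hy
    obtain ⟨f, hf, rfl⟩ := (Submodule.mem_iSup_iff_exists_finsupp _ _).1 hy
    refine ⟨fun i => (ω i)⁻¹ • f i, fun i => Submodule.smul_mem _ _ (hf i), ?_, ?_⟩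
    · refine summable_of_ne_finset_zero (s := f.support) fun i hi => ?_
      simp [Finsupp.notMem_support_iff.1 hi]
    · have : ∀ i, ω i • (ω i)⁻¹ • f i = f i := fun i => smul_inv_smul₀ (hω i).ne' _
      simp only [this]
      rw [tsum_eq_sum (s := f.support) fun i hi => Finsupp.notMem_support_iff.1 hi]
      rfl
end

section
/- Assume ι has at least two elements, M ≠ {0}, and Mⱼ ≠ M for some j ∈ ι. Then there exists a family y : ι → H with yᵢ ∈ Mᵢ for all i and ∑ᵢ ω i ‖yᵢ‖² < ∞, such that the (absolutely convergent) series ∑ᵢ ω i • yᵢ lies in M^⊥, but yⱼ ∉ M^⊥ for some j ∈ ι. (Hence the inclusion of { y : yᵢ ∈ Mᵢ ∩ M^⊥ for all i } in { y : yᵢ ∈ Mᵢ for all i and ∑ᵢ ω i • yᵢ ∈ M^⊥ }, within the ω-weighted ℓ² sequences, is strict.) -/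
open RealInnerProductSpace

/-- If `M ≠ {0}` and `Mⱼ ≠ M` for some `j`, then there is a family
`y` with `yᵢ ∈ Mᵢ`, `∑ᵢ ω i ‖yᵢ‖² < ∞`, whose weighted average lies in `M^⊥`,
although some component `yⱼ` does not lie in `M^⊥`. -/
theorem stmt_13 {H : Type*} [NormedAddCommGroup H] [InnerProductSpace ℝ H] [CompleteSpace H]
    {ι : Type*} [Countable ι] [Nontrivial ι]
    (ω : ι → ℝ) (hω : ∀ i, 0 < ω i) (hωsum : HasSum ω 1)
    (M : ι → Submodule ℝ H) [∀ i, CompleteSpace (M i)]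
    (hMnt : ∀ i, M i ≠ ⊥)
    (hM0 : (⨅ i, M i : Submodule ℝ H) ≠ ⊥)
    (hj : ∃ j, M j ≠ ⨅ i, M i) :
    ∃ y : ι → H, (∀ i, y i ∈ M i) ∧
      (Summable fun i => ω i * ‖y i‖ ^ 2) ∧
      (∑' i, ω i • y i) ∈ (⨅ i, M i : Submodule ℝ H)ᗮ ∧
      ∃ j, y j ∉ (⨅ i, M i : Submodule ℝ H)ᗮ := by
  classical
  obtain ⟨m, hm, hm0⟩ := Submodule.exists_mem_ne_zero_of_ne_bot hM0
  obtain ⟨a, b, hab⟩ := exists_pair_ne ι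
  have hsupp : ∀ i, i ∉ ({a, b} : Finset ι) →
      (if i = a then (ω a)⁻¹ else if i = b then -(ω b)⁻¹ else 0) = 0 := by
    intro i hi
    simp only [Finset.mem_insert, Finset.mem_singleton, not_or] at hi
    simp [hi.1, hi.2]
  refine ⟨fun i => (if i = a then (ω a)⁻¹ else if i = b then -(ω b)⁻¹ else 0) • m,
    fun i => (M i).smul_mem _ ((Submodule.mem_iInf _).1 hm i), ?_, ?_, a, ?_⟩
  · apply summable_of_ne_finset_zero (s := {a, b})
    intro i hi
    beta_reduce
    rw [hsupp i hi]
    simp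
  · rw [tsum_eq_sum (s := {a, b})]
    · rw [Finset.sum_pair hab]
      simp [hab.symm, smul_smul, (hω a).ne', (hω b).ne']
    · intro i hi
      beta_reduce
      rw [hsupp i hi]
      simp
  · intro h
    have h2 := (Submodule.mem_orthogonal _ _).1 h m hm
    simp [inner_smul_right, (hω a).ne', hm0] at h2
end

section
/- Fix the subspaces (Mᵢ)_{i∈ι}. If there exists a weight family λ : ι → ℝ (λ i > 0 for all i, ∑ᵢ λ i = 1) such that the set A_λ = { ∑ᵢ λ i • xᵢ : xᵢ ∈ Mᵢ^⊥ for all i, ∑ᵢ λ i ‖xᵢ‖² < ∞ } is closed in H, then for every weight family ω : ι → ℝ (ω i > 0 for all i, ∑ᵢ ω i = 1) the set A_ω = { ∑ᵢ ω i • xᵢ : xᵢ ∈ Mᵢ^⊥ for all i, ∑ᵢ ω i ‖xᵢ‖² < ∞ } is closed in H; in that case A_ω = M^⊥ for every such ω. -/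
open RealInnerProductSpace

section helpers

variable {H : Type*} [NormedAddCommGroup H] [InnerProductSpace ℝ H] [CompleteSpace H]
    {ι : Type*}

def Aset (M : ι → Submodule ℝ H) (w : ι → ℝ) : Set H :=
  { y : H | ∃ x : ι → H, (∀ i, x i ∈ (M i)ᗮ) ∧
        (Summable fun i => w i * ‖x i‖ ^ 2) ∧ y = ∑' i, w i • x i }

lemma iSup_sub_A (M : ι → Submodule ℝ H) (w : ι → ℝ) (hw : ∀ i, 0 < w i) :
    ((⨆ i, (M i)ᗮ : Submodule ℝ H) : Set H) ⊆ Aset M w := by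
  intro y hy
  obtain ⟨f, hf, hs⟩ := (Submodule.mem_iSup_iff_exists_finsupp _ y).1 hy
  refine ⟨fun i => (w i)⁻¹ • f i, fun i => Submodule.smul_mem _ _ (hf i), ?_, ?_⟩
  · apply summable_of_ne_finset_zero (s := f.support)
    intro i hi
    simp [Finsupp.notMem_support_iff.1 hi]
  · have : ∀ i, w i • (w i)⁻¹ • f i = f i := fun i => smul_inv_smul₀ (hw i).ne' _
    simp only [this]
    rw [tsum_eq_sum (s := f.support), ← hs]
    · rfl
    · intro i hi
      exact Finsupp.notMem_support_iff.1 hi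

lemma A_sub (M : ι → Submodule ℝ H) (w : ι → ℝ) :
    Aset M w ⊆ ((⨅ i, M i : Submodule ℝ H)ᗮ : Submodule ℝ H) := by
  rintro y ⟨x, hx, -, rfl⟩
  by_cases hsum : Summable fun i => w i • x i
  · refine (Submodule.isClosed_orthogonal _).mem_of_tendsto hsum.hasSum
      (Filter.Eventually.of_forall fun s => ?_)
    refine Submodule.sum_mem _ fun i _ => Submodule.smul_mem _ _ ?_
    exact Submodule.orthogonal_le (iInf_le _ i) (hx i)
  · rw [tsum_eq_zero_of_not_summable hsum]
    exact Submodule.zero_mem _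

lemma sub_A (M : ι → Submodule ℝ H) [∀ i, CompleteSpace (M i)] (w : ι → ℝ) (hw : ∀ i, 0 < w i)
    (hc : IsClosed (Aset M w)) :
    (((⨅ i, M i : Submodule ℝ H)ᗮ : Submodule ℝ H) : Set H) ⊆ Aset M w := by
  have h1 : (⨅ i, M i : Submodule ℝ H) = (⨆ i, (M i)ᗮ : Submodule ℝ H)ᗮ := by
    rw [← Submodule.iInf_orthogonal]
    simp only [Submodule.orthogonal_orthogonal]
  rw [h1, Submodule.orthogonal_orthogonal_eq_closure, Submodule.topologicalClosure_coe]
  exact closure_minimal (iSup_sub_A M w hw) hc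

lemma inner_bd (M : ι → Submodule ℝ H) [∀ i, CompleteSpace (M i)] (w : ι → ℝ)
    (hw : ∀ i, 0 < w i) (hs : HasSum w 1) (z : H) (hz : z ∈ Aset M w) :
    ∃ C, ∀ y : H, (∑' i, w i * ‖(M i)ᗮ.starProjection y‖ ^ 2) ≤ 1 → |⟪y, z⟫| ≤ C := by
  obtain ⟨x, hx, hsum, rfl⟩ := hz
  refine ⟨(∑' i, w i * ‖x i‖ ^ 2) + 1, fun y hy => ?_⟩
  have hsx : Summable fun i => w i • x i := by
    refine Summable.of_norm_bounded (hs.summable.add hsum) fun i => ?_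
    rw [norm_smul, Real.norm_of_nonneg (hw i).le]
    nlinarith [hw i, mul_nonneg (hw i).le (sq_nonneg (‖x i‖ - 1)),
      mul_nonneg (hw i).le (sq_nonneg (‖x i‖))]
  have hsP : Summable fun i => w i * ‖(M i)ᗮ.starProjection y‖ ^ 2 := by
    refine Summable.of_nonneg_of_le (fun i => by have := hw i; positivity) (fun i => ?_)
      (hs.summable.mul_right (‖y‖ ^ 2))
    have := hw i
    have := Submodule.norm_starProjection_apply_le (M i)ᗮ y
    gcongr
  have h1 : HasSum (fun i => ⟪y, w i • x i⟫) ⟪y, ∑' i, w i • x i⟫ :=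
    (innerSL ℝ y).hasSum hsx.hasSum
  rw [← h1.tsum_eq]
  have h2 : ∀ i, ‖⟪y, w i • x i⟫‖ ≤ w i * ‖x i‖ ^ 2 + w i * ‖(M i)ᗮ.starProjection y‖ ^ 2 := by
    intro i
    have e : ⟪y, x i⟫ = ⟪(M i)ᗮ.starProjection y, x i⟫ := by
      rw [Submodule.inner_starProjection_left_eq_right,
        Submodule.starProjection_eq_self_iff.2 (hx i)]
    rw [inner_smul_right, e, norm_mul, Real.norm_of_nonneg (hw i).le, ← mul_add]
    refine mul_le_mul_of_nonneg_left ?_ (hw i).le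
    refine (norm_inner_le_norm _ _).trans ?_
    nlinarith [sq_nonneg (‖x i‖ - ‖(M i)ᗮ.starProjection y‖), sq_nonneg (‖x i‖),
      sq_nonneg (‖(M i)ᗮ.starProjection y‖)]
  have h3 := tsum_of_norm_bounded (hsum.add hsP).hasSum h2
  rw [hsum.tsum_add hsP] at h3
  rw [Real.norm_eq_abs] at h3
  linarith

lemma lower (M : ι → Submodule ℝ H) [∀ i, CompleteSpace (M i)] (w : ι → ℝ)
    (hw : ∀ i, 0 < w i) (hs : HasSum w 1) (K : Submodule ℝ H) [CompleteSpace K]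
    (hK : (K : Set H) ⊆ Aset M w) :
    ∃ c > 0, ∀ y ∈ K, c * ‖y‖ ^ 2 ≤ ∑' i, w i * ‖(M i)ᗮ.starProjection y‖ ^ 2 := by
  let B := {y : K // (∑' i, w i * ‖(M i)ᗮ.starProjection (y : H)‖ ^ 2) ≤ 1}
  obtain ⟨C, hC⟩ := banach_steinhaus (ι := B) (g := fun y => innerSL ℝ (y : K)) (by
    intro z
    obtain ⟨C, hC⟩ := inner_bd M w hw hs z (hK z.2)
    exact ⟨C, fun y => hC _ y.2⟩)
  have hC' : ∀ y ∈ K, (∑' i, w i * ‖(M i)ᗮ.starProjection y‖ ^ 2) ≤ 1 → ‖y‖ ≤ C := by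
    intro y hy h
    have := hC ⟨⟨y, hy⟩, h⟩
    rw [innerSL_apply_norm] at this
    exact this
  have hC0 : 0 ≤ C := by
    have := hC' 0 (zero_mem _) (by simp)
    simpa using this
  refine ⟨1 / (C + 1) ^ 2, by positivity, fun y hy => ?_⟩
  rcases eq_or_ne y 0 with rfl | hy0
  · simp
  have hn : 0 < ‖y‖ := norm_pos_iff.2 hy0
  set t : ℝ := (C + 1) / ‖y‖ with ht
  have htp : 0 < t := by positivity
  have e : (∑' i, w i * ‖(M i)ᗮ.starProjection (t • y)‖ ^ 2)
      = t ^ 2 * ∑' i, w i * ‖(M i)ᗮ.starProjection y‖ ^ 2 := by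
    rw [← tsum_mul_left]
    congr 1; ext i
    rw [map_smul, norm_smul, Real.norm_of_nonneg htp.le]; ring
  have h1 : 1 < t ^ 2 * ∑' i, w i * ‖(M i)ᗮ.starProjection y‖ ^ 2 := by
    by_contra! h
    have := hC' (t • y) (K.smul_mem _ hy) (e ▸ h)
    rw [norm_smul, Real.norm_of_nonneg htp.le, ht, div_mul_cancel₀ _ hn.ne'] at this
    linarith
  have e2 : 1 / (C + 1) ^ 2 * ‖y‖ ^ 2 = 1 / t ^ 2 := by
    rw [ht]; field_simp
  rw [e2, div_le_iff₀ (by positivity)]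
  linarith

lemma K_sub_iSup (M : ι → Submodule ℝ H) [∀ i, CompleteSpace (M i)] (w : ι → ℝ)
    (hw : ∀ i, 0 < w i) (hs : HasSum w 1) (K : Submodule ℝ H) [CompleteSpace K]
    (hK : (K : Set H) ⊆ Aset M w) (hMK : ∀ i, (M i)ᗮ ≤ K) :
    K ≤ ⨆ i, (M i)ᗮ := by
  obtain ⟨c, hc, hlow⟩ := lower M w hw hs K hK
  obtain ⟨F, hF⟩ := (hs.eventually (lt_mem_nhds (show 1 - c / 2 < 1 by linarith))).exists
  let Q : ι → K →L[ℝ] K := fun i =>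
    ((M i)ᗮ.starProjection ∘L K.subtypeL).codRestrict K
      (fun y => hMK i (Submodule.starProjection_apply_mem _ _))
  have hQ : ∀ i (y : K), (Q i y : H) = (M i)ᗮ.starProjection (y : H) := fun i y => rfl
  let G : K →L[ℝ] K := ∑ i ∈ F, w i • Q i
  have hG : ∀ y : K, (G y : H) = ∑ i ∈ F, w i • (M i)ᗮ.starProjection (y : H) := by
    intro y
    simp [G, ContinuousLinearMap.sum_apply, hQ]
  let B : K →L[ℝ] K →L[ℝ] ℝ := (innerSL ℝ) ∘L G
  have hB : ∀ u v, B u v = ⟪G u, v⟫ := fun u v => rfl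
  have hcoer : IsCoercive B := by
    refine ⟨c / 2, by positivity, fun u => ?_⟩
    have e : B u u = ∑ i ∈ F, w i * ‖(M i)ᗮ.starProjection (u : H)‖ ^ 2 := by
      rw [hB, Submodule.coe_inner, hG, sum_inner]
      refine Finset.sum_congr rfl fun i _ => ?_
      rw [real_inner_smul_left]
      congr 1
      rw [← real_inner_self_eq_norm_sq, Submodule.inner_starProjection_left_eq_right,
        Submodule.inner_starProjection_left_eq_right,
        Submodule.starProjection_eq_self_iff.2 (Submodule.starProjection_apply_mem _ _)]
    rw [e]
    have hle : ∀ i, w i * ‖(M i)ᗮ.starProjection (u : H)‖ ^ 2 ≤ w i * ‖(u : H)‖ ^ 2 := by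
      intro i
      have := hw i
      have := Submodule.norm_starProjection_apply_le (M i)ᗮ (u : H)
      gcongr
    have hsP : Summable fun i => w i * ‖(M i)ᗮ.starProjection (u : H)‖ ^ 2 :=
      Summable.of_nonneg_of_le (fun i => by have := hw i; positivity) hle
        (hs.summable.mul_right (‖(u : H)‖ ^ 2))
    have h1 := (hs.mul_right (‖(u : H)‖ ^ 2)).sub hsP.hasSum
    have h2 := sum_le_hasSum F (fun i _ => sub_nonneg.2 (hle i)) h1
    rw [Finset.sum_sub_distrib, ← Finset.sum_mul] at h2
    have h3 := hlow u u.2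
    have h4 : (1 - c / 2) * ‖(u : H)‖ ^ 2 ≤ (∑ i ∈ F, w i) * ‖(u : H)‖ ^ 2 := by
      gcongr
    have h5 : ‖u‖ = ‖(u : H)‖ := rfl
    rw [h5]
    nlinarith
  intro y hy
  have hr := hcoer.range_eq_top
  obtain ⟨u, hu⟩ : (⟨y, hy⟩ : K) ∈ (InnerProductSpace.continuousLinearMapOfBilin B).range := by
    rw [hr]; trivial
  have hGu : G u = ⟨y, hy⟩ := by
    rw [← hu]
    refine ext_inner_right ℝ fun v => ?_
    rw [← hB]
    exact (InnerProductSpace.continuousLinearMapOfBilin_apply B u v).symm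
  have : y = (G u : H) := by rw [hGu]
  rw [this, hG]
  refine Submodule.sum_mem _ fun i _ => Submodule.smul_mem _ _ ?_
  exact Submodule.mem_iSup_of_mem i (Submodule.starProjection_apply_mem _ _)

end helpers


/-- If `A_λ` is closed in `H` for one weight family `λ`, then `A_ω`
is closed for every weight family `ω`, and in that case `A_ω = M^⊥` for each such `ω`. -/
theorem stmt_16 {H : Type*} [NormedAddCommGroup H] [InnerProductSpace ℝ H] [CompleteSpace H]
    {ι : Type*} [Countable ι] [Nonempty ι]
    (M : ι → Submodule ℝ H) [∀ i, CompleteSpace (M i)]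
    (hMnt : ∀ i, M i ≠ ⊥)
    (hlam : ∃ lam : ι → ℝ, (∀ i, 0 < lam i) ∧ HasSum lam 1 ∧
      IsClosed { y : H | ∃ x : ι → H, (∀ i, x i ∈ (M i)ᗮ) ∧
        (Summable fun i => lam i * ‖x i‖ ^ 2) ∧ y = ∑' i, lam i • x i }) :
    ∀ ω : ι → ℝ, (∀ i, 0 < ω i) → HasSum ω 1 →
      IsClosed { y : H | ∃ x : ι → H, (∀ i, x i ∈ (M i)ᗮ) ∧
        (Summable fun i => ω i * ‖x i‖ ^ 2) ∧ y = ∑' i, ω i • x i } ∧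
      { y : H | ∃ x : ι → H, (∀ i, x i ∈ (M i)ᗮ) ∧
        (Summable fun i => ω i * ‖x i‖ ^ 2) ∧ y = ∑' i, ω i • x i } =
        (((⨅ i, M i : Submodule ℝ H)ᗮ : Submodule ℝ H) : Set H) := by
  obtain ⟨lam, hl, hls, hcl⟩ := hlam
  intro ω hω hωs
  have hK := sub_A M lam hl hcl
  have h1 := K_sub_iSup M lam hl hls _ hK
    (fun i => Submodule.orthogonal_le (iInf_le _ i))
  have h2 : Aset M ω = (((⨅ i, M i : Submodule ℝ H)ᗮ : Submodule ℝ H) : Set H) :=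
    Set.Subset.antisymm (A_sub M ω) (fun y hy => iSup_sub_A M ω hω (h1 hy))
  refine ⟨?_, h2⟩
  change IsClosed (Aset M ω)
  rw [h2]
  exact Submodule.isClosed_orthogonal _
end
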